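/- Let q = p^f be a power of a prime p, let 2m ≥ 4 and suppose GSp_{2m}(q) is not solvable. Let π be a set of primes with 2 ∉ π and p ∉ π such that |π ∩ π(GSp_{2m}(q))| ≥ 2, and suppose GSp_{2m}(q) has a Hall π-subgroup H. Set G = H·Sp_{2m}(q). Then there exist x, y, z ∈ G such that H ∩ H^x ∩ H^y ∩ H^z is contained in the center Z(GSp_{2m}(q)), i.e. consists of scalar matrices. -/

import Mathlib

open Matrix Pointwise

/-- `H^x = x⁻¹ H x`. -/
def conjBy {G : Type*} [Group G] (H : Subgroup G) (x : G) : Subgroup G :=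
  Subgroup.map ((MulAut.conj x⁻¹).toMonoidHom) H

/-- Hall π-subgroup of the whole group. -/
def IsHallSubgroup {G : Type*} [Group G] (π : Set ℕ) (H : Subgroup G) : Prop :=
  (∀ r : ℕ, r.Prime → r ∣ Nat.card H → r ∈ π) ∧ ∀ r ∈ π, ¬ r ∣ H.index

/-- Hall π-subgroup of the subgroup `K`. -/
def IsHallSubgroupIn {G : Type*} [Group G] (π : Set ℕ) (K H : Subgroup G) : Prop :=
  H ≤ K ∧ (∀ r : ℕ, r.Prime → r ∣ Nat.card H → r ∈ π) ∧ ∀ r ∈ π, ¬ r ∣ H.relIndex K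

/-- The subgroup `SL_n` of `GL_n`. -/
def SLsub (n : ℕ) (F : Type*) [Field F] : Subgroup (GL (Fin n) F) where
  carrier := {g | Matrix.det (g : Matrix (Fin n) (Fin n) F) = 1}
  one_mem' := by simp
  mul_mem' := by
    intro a b ha hb
    simp only [Set.mem_setOf_eq, Units.val_mul, Matrix.det_mul] at *
    rw [ha, hb, one_mul]
  inv_mem' := by
    intro g hg
    simp only [Set.mem_setOf_eq] at *
    have h1 : ((g⁻¹ : GL (Fin n) F) : Matrix (Fin n) (Fin n) F) *
        (g : Matrix (Fin n) (Fin n) F) = 1 := g.inv_mul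
    have := congrArg Matrix.det h1
    rw [Matrix.det_mul, Matrix.det_one, hg, mul_one] at this
    exact this

/-- The group of similitudes of the bilinear form `B` (acting on row vectors). -/
def similitudeGroup {n : ℕ} {F : Type*} [Field F]
    (B : (Fin n → F) → (Fin n → F) → F) : Subgroup (GL (Fin n) F) where
  carrier := {g | ∃ c : Fˣ, ∀ u v : Fin n → F,
    B (Matrix.vecMul u (g : Matrix (Fin n) (Fin n) F))
      (Matrix.vecMul v (g : Matrix (Fin n) (Fin n) F)) = (c : F) * B u v}
  one_mem' := ⟨1, by simp⟩
  mul_mem' := by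
    rintro a b ⟨c, hc⟩ ⟨d, hd⟩
    refine ⟨c * d, fun u v => ?_⟩
    simp only [Units.val_mul, ← Matrix.vecMul_vecMul, hd, hc]
    ring
  inv_mem' := by
    rintro g ⟨c, hc⟩
    refine ⟨c⁻¹, fun u v => ?_⟩
    have h1 : ∀ w : Fin n → F, Matrix.vecMul
        (Matrix.vecMul w ((g⁻¹ : GL (Fin n) F) : Matrix (Fin n) (Fin n) F))
        (g : Matrix (Fin n) (Fin n) F) = w := by
      intro w
      rw [Matrix.vecMul_vecMul, g.inv_mul, Matrix.vecMul_one]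
    have h2 := hc (Matrix.vecMul u ((g⁻¹ : GL (Fin n) F) : Matrix (Fin n) (Fin n) F))
      (Matrix.vecMul v ((g⁻¹ : GL (Fin n) F) : Matrix (Fin n) (Fin n) F))
    rw [h1, h1] at h2
    rw [h2, Units.val_inv_eq_inv_val, inv_mul_cancel_left₀ (by exact_mod_cast c.ne_zero)]

/-- The isometry group of the bilinear form `B` (acting on row vectors). -/
def isometryGroup {n : ℕ} {F : Type*} [Field F]
    (B : (Fin n → F) → (Fin n → F) → F) : Subgroup (GL (Fin n) F) where
  carrier := {g | ∀ u v : Fin n → F,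
    B (Matrix.vecMul u (g : Matrix (Fin n) (Fin n) F))
      (Matrix.vecMul v (g : Matrix (Fin n) (Fin n) F)) = B u v}
  one_mem' := by simp
  mul_mem' := by
    intro a b ha hb u v
    simp only [Set.mem_setOf_eq] at ha hb
    simp only [Units.val_mul, ← Matrix.vecMul_vecMul]
    rw [hb, ha]
  inv_mem' := by
    intro g hg u v
    have h1 : ∀ w : Fin n → F, Matrix.vecMul
        (Matrix.vecMul w ((g⁻¹ : GL (Fin n) F) : Matrix (Fin n) (Fin n) F))
        (g : Matrix (Fin n) (Fin n) F) = w := by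
      intro w
      rw [Matrix.vecMul_vecMul, g.inv_mul, Matrix.vecMul_one]
    have h2 := hg (Matrix.vecMul u ((g⁻¹ : GL (Fin n) F) : Matrix (Fin n) (Fin n) F))
      (Matrix.vecMul v ((g⁻¹ : GL (Fin n) F) : Matrix (Fin n) (Fin n) F))
    rw [h1, h1] at h2
    exact h2.symm

/-- The group of similitudes of the quadratic form `Q` (acting on row vectors). -/
def qSimilitudeGroup {n : ℕ} {F : Type*} [Field F]
    (Q : (Fin n → F) → F) : Subgroup (GL (Fin n) F) where
  carrier := {g | ∃ c : Fˣ, ∀ v : Fin n → F,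
    Q (Matrix.vecMul v (g : Matrix (Fin n) (Fin n) F)) = (c : F) * Q v}
  one_mem' := ⟨1, by simp⟩
  mul_mem' := by
    rintro a b ⟨c, hc⟩ ⟨d, hd⟩
    refine ⟨c * d, fun v => ?_⟩
    simp only [Units.val_mul, ← Matrix.vecMul_vecMul, hd, hc]
    ring
  inv_mem' := by
    rintro g ⟨c, hc⟩
    refine ⟨c⁻¹, fun v => ?_⟩
    have h1 : ∀ w : Fin n → F, Matrix.vecMul
        (Matrix.vecMul w ((g⁻¹ : GL (Fin n) F) : Matrix (Fin n) (Fin n) F))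
        (g : Matrix (Fin n) (Fin n) F) = w := by
      intro w
      rw [Matrix.vecMul_vecMul, g.inv_mul, Matrix.vecMul_one]
    have h2 := hc (Matrix.vecMul v ((g⁻¹ : GL (Fin n) F) : Matrix (Fin n) (Fin n) F))
    rw [h1] at h2
    rw [h2, Units.val_inv_eq_inv_val, inv_mul_cancel_left₀ (by exact_mod_cast c.ne_zero)]

/-- The unitary group `GU_n` with respect to the field automorphism `φ`. -/
def GUgrp (n : ℕ) {K : Type*} [Field K] (φ : K →+* K) : Subgroup (GL (Fin n) K) where
  carrier := {g | ((g : Matrix (Fin n) (Fin n) K).map φ)ᵀ * (g : Matrix (Fin n) (Fin n) K) = 1}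
  one_mem' := by
    simp [Matrix.map_one φ φ.map_zero φ.map_one]
  mul_mem' := by
    intro a b ha hb
    simp only [Set.mem_setOf_eq, Units.val_mul, Matrix.map_mul, Matrix.transpose_mul] at *
    calc ((b : Matrix (Fin n) (Fin n) K).map φ)ᵀ * ((a : Matrix (Fin n) (Fin n) K).map φ)ᵀ *
          ((a : Matrix (Fin n) (Fin n) K) * (b : Matrix (Fin n) (Fin n) K))
        = ((b : Matrix (Fin n) (Fin n) K).map φ)ᵀ *
          (((a : Matrix (Fin n) (Fin n) K).map φ)ᵀ * (a : Matrix (Fin n) (Fin n) K)) *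
          (b : Matrix (Fin n) (Fin n) K) := by noncomm_ring
      _ = 1 := by rw [ha, mul_one, hb]
  inv_mem' := by
    intro g hg
    simp only [Set.mem_setOf_eq] at *
    have hcomm : (g : Matrix (Fin n) (Fin n) K) * ((g : Matrix (Fin n) (Fin n) K).map φ)ᵀ = 1 :=
      mul_eq_one_comm.mp hg
    have h1 : ((g : Matrix (Fin n) (Fin n) K) * ((g⁻¹ : GL (Fin n) K) : Matrix (Fin n) (Fin n) K)).map φ = 1 := by
      rw [g.mul_inv]
      exact Matrix.map_one φ φ.map_zero φ.map_one
    rw [Matrix.map_mul] at h1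
    have h2 := congrArg Matrix.transpose h1
    rw [Matrix.transpose_mul, Matrix.transpose_one] at h2
    calc (((g⁻¹ : GL (Fin n) K) : Matrix (Fin n) (Fin n) K).map φ)ᵀ *
          ((g⁻¹ : GL (Fin n) K) : Matrix (Fin n) (Fin n) K)
        = (((g⁻¹ : GL (Fin n) K) : Matrix (Fin n) (Fin n) K).map φ)ᵀ *
          (((g : Matrix (Fin n) (Fin n) K).map φ)ᵀ * (g : Matrix (Fin n) (Fin n) K)) *
          ((g⁻¹ : GL (Fin n) K) : Matrix (Fin n) (Fin n) K) := by rw [hg, mul_one]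
      _ = ((((g⁻¹ : GL (Fin n) K) : Matrix (Fin n) (Fin n) K).map φ)ᵀ *
          ((g : Matrix (Fin n) (Fin n) K).map φ)ᵀ) *
          ((g : Matrix (Fin n) (Fin n) K) * ((g⁻¹ : GL (Fin n) K) : Matrix (Fin n) (Fin n) K)) := by
            noncomm_ring
      _ = 1 := by rw [h2, g.mul_inv, mul_one]

/-!
An element of odd order can be rescaled to an isometry, because its multiplier is a square; this
does not change the endomorphisms commuting with it, so let `H` consist of isometries. Splitting
`V` orthogonally, one finds an endomorphism `e` commuting with `H` and a totally isotropic family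
`a` such that `a` and `e ∘ a` together span `V` and `B (e (a i)) (a j)` vanishes exactly for
`i ≠ j`. On a sum of two isotropic irreducible summands paired by `B`, `e` is the projection onto
one of them. On an irreducible nondegenerate summand the commutant is a finite field `K`, and
taking adjoints is an involution of `K`. It is not the identity: if it were, then for `k ∈ K` of
nonzero trace the operator `f ↦ ∑ g, (ρ g)* f* (ρ g) k`, which maps all endomorphisms into `K`,
would act on `K` as multiplication by `|H| k`, of nonzero trace; but its trace is, up to sign, that
of `∑ g, ρ (g ^ 2) k`, and `∑ g, ρ (g ^ 2) = ∑ g, ρ g = 0` since `|H|` is odd. So `V` is a Hermitian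
space over `K`, and `e` is an element of `K` of trace one over the fixed field.

Adding to `1` the operators `v ↦ ∑ i j, S i j • B v (a i) • a j`, with `S` a diagonal matrix unit
and then the adjacency matrix of a path, gives isometries `x` and `y`. Put `D = x e x⁻¹ - e` and
`D₁ = y e y⁻¹ - e`; then `D D₁ D` is a nonzero multiple of `v ↦ B v (a 0) • a 0`, so whatever
commutes with `e`, `x e x⁻¹` and `y e y⁻¹` has `a 0` as an eigenvector. Along the path, `D₁`
carries the eigenvalue to every `a i`, and `e` carries it to every `e (a i)`. Hence
`H ∩ H^x ∩ H^y`, which commutes with all three as matrices act on row vectors from the right, is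
scalar.
-/

open LinearMap (BilinForm)
open LinearMap.BilinForm Module

section PolarFrame

variable {F V : Type*} [Field F] [AddCommGroup V] [Module F V]

/-- A polar frame for `e`: a totally isotropic family `a` which, together with its image under `e`,
spans the space, and on which the pairing `B (e (a i)) (a j)` is diagonal with nonzero entries.
It generalizes the family `u i + x i` obtained from dual bases `u` and `x` of two complementary
isotropic subspaces, with `e` the projection onto the first. Accordingly `e` is required to be
idempotent only as far as `B` sees it on the family. -/
structure IsPolarFrame (B : BilinForm F V) (e : Module.End F V) {ι : Type*} (a : ι → V) :
    Prop where
  isotropic (i j : ι) : B (a i) (a j) = 0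
  orthogonal {i j : ι} (hij : i ≠ j) : B (e (a i)) (a j) = 0
  anisotropic (i : ι) : B (e (a i)) (a i) ≠ 0
  apply_sq (i j : ι) : B (e (e (a i))) (a j) = B (e (a i)) (a j)
  span_eq_top : Submodule.span F (Set.range a ∪ Set.range (e ∘ a)) = ⊤

variable {B : BilinForm F V} {e : Module.End F V}

namespace IsPolarFrame

theorem of_subsingleton [Subsingleton V] {ι : Type*} [IsEmpty ι] (a : ι → V) :
    IsPolarFrame B e a where
  isotropic i := isEmptyElim i
  orthogonal {i} := isEmptyElim i
  anisotropic i := isEmptyElim i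
  apply_sq i := isEmptyElim i
  span_eq_top := Subsingleton.elim _ _

theorem reindex {ι κ : Type*} {a : ι → V} (ha : IsPolarFrame B e a) (σ : κ ≃ ι) :
    IsPolarFrame B e (a ∘ σ) where
  isotropic i j := ha.isotropic _ _
  orthogonal hij := ha.orthogonal (σ.injective.ne hij)
  anisotropic i := ha.anisotropic _
  apply_sq i j := ha.apply_sq _ _
  span_eq_top := by
    rw [← Function.comp_assoc, σ.surjective.range_comp, σ.surjective.range_comp, ha.span_eq_top]

theorem span_range_coe {U : Submodule F V} {eU : Module.End F U} (heU : ∀ u : U, e u = eU u)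
    {ι : Type*} {a : ι → U} (ha : IsPolarFrame (B.restrict U) eU a) :
    Submodule.span F (Set.range (fun i => (a i : V)) ∪ Set.range (fun i => e (a i))) = U := by
  have h := congrArg (Submodule.map U.subtype) ha.span_eq_top
  rw [Submodule.map_span, Set.image_union, ← Set.range_comp, ← Set.range_comp,
    Submodule.map_subtype_top] at h
  simpa only [heU, Function.comp_def, Submodule.coe_subtype] using h

theorem sumElim {U W : Submodule F V} (hUW : Codisjoint U W) (hB : B.IsRefl)
    (horth : W ≤ B.orthogonal U) {eU : Module.End F U} {eW : Module.End F W}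
    (heU : ∀ u, e ((u : U) : V) = eU u) (heW : ∀ w, e ((w : W) : V) = eW w)
    {ι κ : Type*} {a : ι → U} {b : κ → W}
    (ha : IsPolarFrame (B.restrict U) eU a) (hb : IsPolarFrame (B.restrict W) eW b) :
    IsPolarFrame B e (Sum.elim (fun i => (a i : V)) (fun j => (b j : V))) := by
  have hUW₀ (u : U) (w : W) : B u w = 0 := horth w.2 u u.2
  have hWU₀ (w : W) (u : U) : B w u = 0 := hB _ _ (hUW₀ u w)
  refine ⟨?_, ?_, ?_, ?_, ?_⟩
  · rintro (i | i) (j | j)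
    exacts [ha.isotropic i j, hUW₀ _ _, hWU₀ _ _, hb.isotropic i j]
  · rintro (i | i) (j | j) hij <;> simp only [Sum.elim_inl, Sum.elim_inr, heU, heW]
    exacts [ha.orthogonal (ne_of_apply_ne _ hij), hUW₀ _ _, hWU₀ _ _,
      hb.orthogonal (ne_of_apply_ne _ hij)]
  · rintro (i | i) <;> simp only [Sum.elim_inl, Sum.elim_inr, heU, heW]
    exacts [ha.anisotropic i, hb.anisotropic i]
  · rintro (i | i) (j | j) <;> simp only [Sum.elim_inl, Sum.elim_inr, heU, heW, hUW₀, hWU₀]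
    exacts [ha.apply_sq i j, hb.apply_sq i j]
  · refine eq_top_iff.mpr (hUW.eq_top.symm.trans_le (sup_le
      ((ha.span_range_coe heU).symm.trans_le (Submodule.span_mono ?_))
      ((hb.span_range_coe heW).symm.trans_le (Submodule.span_mono ?_))))
    · rintro _ (⟨i, rfl⟩ | ⟨i, rfl⟩)
      exacts [.inl ⟨.inl i, rfl⟩, .inr ⟨.inl i, rfl⟩]
    · rintro _ (⟨i, rfl⟩ | ⟨i, rfl⟩)
      exacts [.inl ⟨.inr i, rfl⟩, .inr ⟨.inr i, rfl⟩]

end IsPolarFrame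

theorem isPerfPair_of_codisjoint_isotropic [FiniteDimensional F V] (hB : B.IsRefl)
    (hnd : B.Nondegenerate) {U X : Submodule F V} (h : Codisjoint U X) (hU : U ≤ B.orthogonal U)
    (hX : X ≤ B.orthogonal X) : (B.domRestrict₁₂ X U).IsPerfPair := by
  have eq_zero {v : V} (hvU : ∀ u ∈ U, B v u = 0) (hvX : ∀ x ∈ X, B v x = 0) : v = 0 := by
    refine hnd.1 v fun w => ?_
    obtain ⟨u, hu, x, hx, rfl⟩ := Submodule.mem_sup.mp (h.eq_top ▸ Submodule.mem_top (x := w))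
    rw [map_add, hvU u hu, hvX x hx, add_zero]
  refine .of_injective ((injective_iff_map_eq_zero _).mpr fun x hx => ?_)
    ((injective_iff_map_eq_zero _).mpr fun u hu => ?_)
  · exact Subtype.ext (eq_zero (fun u hu => LinearMap.congr_fun hx ⟨u, hu⟩)
      fun y hy => hX x.2 y hy |> hB _ _)
  · exact Subtype.ext (eq_zero (fun w hw => hB _ _ (hU u.2 w hw))
      fun x hx' => hB _ _ (LinearMap.congr_fun hu ⟨x, hx'⟩))

theorem exists_isPolarFrame_of_codisjoint_isotropic [FiniteDimensional F V] (hB : B.IsAlt)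
    (hnd : B.Nondegenerate) {U X : Submodule F V} (h : Codisjoint U X) (hU : U ≤ B.orthogonal U)
    (hX : X ≤ B.orthogonal X) (heU : ∀ u ∈ U, e u = u) (heX : ∀ x ∈ X, e x = 0) :
    ∃ a : Fin (finrank F U) → V, IsPolarFrame B e a := by
  have hperf := isPerfPair_of_codisjoint_isotropic hB.isRefl hnd h hU hX
  let u := finBasis F U
  let x : Basis (Fin (finrank F U)) F X := u.dualBasis.map (B.domRestrict₁₂ X U).toPerfPair.symm
  have huu (i j) : B (u i) (u j) = 0 := hU (u j).2 _ (u i).2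
  have hxx (i j) : B (x i) (x j) = 0 := hX (x j).2 _ (x i).2
  have hxu (i j) : B (x i) (u j) = if j = i then 1 else 0 :=
    (LinearMap.congr_fun ((B.domRestrict₁₂ X U).apply_symm_toPerfPair_self (u.dualBasis i))
      (u j)).trans (u.dualBasis_apply_self i j)
  have hux (i j) : B (u i) (x j) = -if i = j then 1 else 0 := by rw [← hxu, hB.neg_eq]
  have heu (i) : e (u i) = u i := heU _ (u i).2
  have hea (i) : e (u i + x i) = u i := by rw [map_add, heu, heX _ (x i).2, add_zero]
  refine ⟨fun i => u i + x i, fun i j => ?_, fun hij => ?_, fun i => ?_, fun i j => ?_, ?_⟩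
  · simp [huu, hux, hxx, hxu, eq_comm]
  · simp [hea, huu, hux, hij]
  · simp [hea, huu, hux]
  · rw [hea, heu]
  · set S := Submodule.span F (_ : Set V)
    have huS (i) : (u i : V) ∈ S := Submodule.subset_span (.inr ⟨i, hea i⟩)
    have hxS (i) : (x i : V) ∈ S := by
      simpa using S.sub_mem (Submodule.subset_span (.inl ⟨i, rfl⟩)) (huS i)
    have le_of_basis {W : Submodule F V} (b : Basis (Fin (finrank F U)) F W)
        (hb : ∀ i, (b i : V) ∈ S) : W ≤ S := by
      rw [← W.map_subtype_top, ← b.span_eq, Submodule.map_span_le]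
      rintro _ ⟨i, rfl⟩
      exact hb i
    exact eq_top_iff.mpr
      (h.eq_top.symm.trans_le (sup_le (le_of_basis u huS) (le_of_basis x hxS)))

end PolarFrame

theorem restrict_orthogonal_nondegenerate {F V : Type*} [Field F] [AddCommGroup V] [Module F V]
    [FiniteDimensional F V] {B : BilinForm F V} (hB : B.IsRefl) (hnd : B.Nondegenerate)
    {U : Submodule F V} (h : IsCompl U (B.orthogonal U)) :
    (B.restrict (B.orthogonal U)).Nondegenerate := by
  refine B.nondegenerate_restrict_of_disjoint_orthogonal hB ?_
  rw [orthogonal_orthogonal hnd hB]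
  exact h.disjoint.symm

section OrthogonalBasis

variable {F V : Type*} [Field F] [AddCommGroup V] [Module F V] {C : BilinForm F V}

theorem mem_orthogonal_span_singleton_iff {x y : V} :
    y ∈ C.orthogonal (F ∙ x) ↔ C x y = 0 := by
  rw [orthogonal_span_singleton_eq_toLin_ker]; rfl

theorem exists_anisotropic_orthogonal (hs : C.IsSymm) (hnd : C.Nondegenerate) {a : V}
    (ha : C a a ≠ 0) : ∃ b, C b b ≠ 0 ∧
      (Subsingleton (C.orthogonal (F ∙ b)) ∨ ∃ w ∈ C.orthogonal (F ∙ b), C w w ≠ 0) := by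
  by_cases hw : ∃ w ∈ C.orthogonal (F ∙ a), C w w ≠ 0
  · exact ⟨a, ha, .inr hw⟩
  rcases subsingleton_or_nontrivial (C.orthogonal (F ∙ a)) with hsub | hnt
  · exact ⟨a, ha, .inl hsub⟩
  push Not at hw
  -- `C` is alternating on `aᗮ`: a pair `u, v` in `aᗮ` with `C u v ≠ 0` allows replacing `a` by
  -- `a + u`, which is orthogonal to an anisotropic combination of `a` and `v`.
  obtain ⟨u, hu⟩ := exists_ne (0 : C.orthogonal (F ∙ a))
  obtain ⟨v, huv⟩ : ∃ v : C.orthogonal (F ∙ a), C u v ≠ 0 := by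
    by_contra! h
    exact hu ((restrict_nondegenerate_orthogonal_spanSingleton C hnd hs.isRefl ha).1 u h)
  have hau : C a u = 0 := mem_orthogonal_span_singleton_iff.mp u.2
  have hav : C a v = 0 := mem_orthogonal_span_singleton_iff.mp v.2
  have hua : C u a = 0 := (hs.eq _ _).symm.trans hau
  have hva : C v a = 0 := (hs.eq _ _).symm.trans hav
  have huu : C u u = 0 := hw u u.2
  have hvv : C v v = 0 := hw v v.2
  refine ⟨a + u, by simpa [hau, hua, huu] using ha, .inr
    ⟨v - (C u v * (C a a)⁻¹) • a, mem_orthogonal_span_singleton_iff.mpr ?_, ?_⟩⟩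
  · simp [hua, hav, ha]
  · simp [hav, hva, hvv, ha, huv]

theorem exists_iIsOrtho_basis_succ (hs : C.IsSymm) {x : V} (hx : C x x ≠ 0) {d : ℕ}
    {b : Basis (Fin d) F (C.orthogonal (F ∙ x))}
    (hb : (C.restrict (C.orthogonal (F ∙ x))).iIsOrtho b) :
    ∃ b' : Basis (Fin (d + 1)) F V, C.iIsOrtho b' := by
  have hxb (i) : C x (b i) = 0 := mem_orthogonal_span_singleton_iff.mp (b i).2
  let b' : Basis (Fin (d + 1)) F V := Basis.mkFinCons x b
    (fun c y hy hc => by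
      have hxy : C x y = 0 := mem_orthogonal_span_singleton_iff.mp hy
      simpa [hxy, hx] using congrArg (C x) hc)
    (fun y => ⟨-(C x y / C x x), mem_orthogonal_span_singleton_iff.mpr (by simp [hx])⟩)
  refine ⟨b', ?_⟩
  rw [Basis.coe_mkFinCons]
  intro i j hij
  cases i using Fin.cases with
  | zero =>
    cases j using Fin.cases with
    | zero => exact absurd rfl hij
    | succ j => exact hxb j
  | succ i =>
    cases j using Fin.cases with
    | zero => exact (hs.eq _ _).symm.trans (hxb i)
    | succ j => exact hb (ne_of_apply_ne _ hij)

theorem exists_orthogonal_basis_of_apply_self_ne_zero [FiniteDimensional F V] (hs : C.IsSymm)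
    (hnd : C.Nondegenerate) {a : V} (ha : C a a ≠ 0) :
    ∃ b : Basis (Fin (finrank F V)) F V, C.iIsOrtho b := by
  suffices ∀ d, finrank F V = d → ∃ b : Basis (Fin d) F V, C.iIsOrtho b from this _ rfl
  intro d hd
  induction d generalizing V with
  | zero => exact ⟨basisOfFinrankZero hd, fun i => i.elim0⟩
  | succ d ih =>
    obtain ⟨x, hx, hxw⟩ := exists_anisotropic_orthogonal hs hnd ha
    have hfin : finrank F (C.orthogonal (F ∙ x)) = d := by
      have := Submodule.finrank_add_eq_of_isCompl (isCompl_span_singleton_orthogonal hx)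
      rw [finrank_span_singleton (ne_zero_of_not_isOrtho_self x hx)] at this
      lia
    rcases hxw with hsub | ⟨w, hw, hww⟩
    · obtain rfl : d = 0 := by rw [← hfin, finrank_zero_of_subsingleton]
      exact exists_iIsOrtho_basis_succ hs hx (b := basisOfFinrankZero hfin) fun i => i.elim0
    · obtain ⟨b, hb⟩ := ih (hs.restrict _)
        (restrict_nondegenerate_orthogonal_spanSingleton C hnd hs.isRefl hx)
        (a := ⟨w, hw⟩) hww hfin
      exact exists_iIsOrtho_basis_succ hs hx hb

end OrthogonalBasis

section HermitianFrame

theorem exists_add_map_eq_one_of_involutive {K : Type*} [Field K] {σ : K →+* K}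
    (hσ : Function.Involutive σ) (hne : σ ≠ RingHom.id K) : ∃ e, e + σ e = 1 ∧ e ≠ σ e := by
  obtain ⟨f, hf⟩ : ∃ f, σ f ≠ f := by
    by_contra! h
    exact hne (RingHom.ext h)
  have of_trace_ne_zero {g : K} (hg : σ g ≠ g) (hs : g + σ g ≠ 0) :
      ∃ e, e + σ e = 1 ∧ e ≠ σ e := by
    have hσs : σ (g + σ g) = g + σ g := by rw [map_add, hσ g, add_comm]
    refine ⟨g / (g + σ g), ?_, ?_⟩ <;> rw [map_div₀, hσs]
    · rw [← add_div, div_self hs]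
    · exact fun h => hg.symm ((div_left_inj' hs).mp h)
  by_cases hs : f + σ f = 0
  · -- `f` has trace zero and differs from `-f`, so that `2 ≠ 0` is the trace of `1` and of `f + 1`.
    refine of_trace_ne_zero (g := f + 1) (by simpa using hf) fun h => hf ?_
    rw [map_add, map_one] at h
    linear_combination (1 + f) * hs - f * h
  · exact of_trace_ne_zero hf hs

variable {F K V : Type*} [Field F] [Field K] [Algebra F K] [AddCommGroup V] [Module F V]
  [Module K V] {B : BilinForm F V} {σ : K →ₐ[F] K} {e : K}

theorem exists_fixed_add_mul_of_involutive (hσ : Function.Involutive σ)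
    (hne : e ≠ σ e) (f : K) : ∃ k l : K, σ k = k ∧ σ l = l ∧ k + e * l = f := by
  have hd : e - σ e ≠ 0 := sub_ne_zero.mpr hne
  have hl : σ ((f - σ f) / (e - σ e)) = (f - σ f) / (e - σ e) := by
    rw [map_div₀, map_sub, map_sub, hσ, hσ, ← neg_sub f, ← neg_sub e, neg_div_neg_eq]
  refine ⟨f - e * ((f - σ f) / (e - σ e)), _, ?_, hl, sub_add_cancel _ _⟩
  rw [map_sub, map_mul, hl]
  field_simp
  ring

theorem exists_smul_apply_self_ne_zero [Nontrivial V] (hB : B.IsAlt) (hnd : B.Nondegenerate)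
    (hBσ : ∀ (k : K) (u v : V), B (k • u) v = B u (σ k • v))
    (hne : e ≠ σ e) : ∃ a : V, B (e • a) a ≠ 0 := by
  by_contra! h
  obtain ⟨a, ha⟩ := exists_ne (0 : V)
  refine ha ((smul_eq_zero_iff_right (sub_ne_zero.mpr hne)).mp (hnd.1 _ fun b => ?_))
  have hpol : B (e • a) b + B (e • b) a = 0 := by
    simpa [h a, h b, add_comm] using h (a + b)
  rw [sub_smul, map_sub, LinearMap.sub_apply, ← hpol, hBσ e b, ← hB.neg_eq (σ e • a)]
  ring

theorem smul_apply_self_eq_zero_of_fixed (hB : B.IsAlt) (hσ : Function.Involutive σ)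
    (hBσ : ∀ (k : K) (u v : V), B (k • u) v = B u (σ k • v)) (he : e + σ e = 1) {k : K}
    (hk : σ k = k) (a : V) : B (k • a) a = 0 := by
  have h : B (σ e • k • a) a = -B (e • k • a) a := by
    rw [hBσ, hσ, ← hB.neg_eq, smul_comm, hBσ k, hk]
  rw [← one_smul K (k • a), ← he, add_smul, map_add, LinearMap.add_apply, h, add_neg_cancel]

variable [IsScalarTower F K V]

theorem isPolarFrame_smul_of_basis_fixed (hB : B.IsAlt) (hσ : Function.Involutive σ)
    (hBσ : ∀ (k : K) (u v : V), B (k • u) v = B u (σ k • v)) (he : e + σ e = 1)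
    (hne : e ≠ σ e) {a : V} (hspan : Submodule.span K {a} = ⊤) {ι : Type*}
    (b : Basis ι F (AlgHom.equalizer σ (AlgHom.id F K)))
    (horth : ∀ i j, i ≠ j → B (e • (b i : K) • a) ((b j : K) • a) = 0)
    (hself : ∀ i, B (e • (b i : K) • a) ((b i : K) • a) ≠ 0) :
    IsPolarFrame B (Algebra.lsmul F F V e) (fun i => (b i : K) • a) where
  isotropic i j := by
    have hb (i) : σ (b i) = b i := (b i).2
    rw [← hb j, ← hBσ, smul_smul]
    exact smul_apply_self_eq_zero_of_fixed hB hσ hBσ he (by rw [map_mul, hb, hb]) a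
  orthogonal hij := horth _ _ hij
  anisotropic i := hself i
  apply_sq i j := by
    have hb (i) : σ (b i) = b i := (b i).2
    have hfix : σ ((b j * (e * e - e)) * b i) = (b j * (e * e - e)) * b i := by
      rw [map_mul, map_mul, map_sub, map_mul, hb, hb, eq_sub_of_add_eq' he]
      ring
    have h := smul_apply_self_eq_zero_of_fixed hB hσ hBσ he hfix a
    rw [mul_smul, mul_smul, hBσ, hb, sub_smul, mul_smul, map_sub, LinearMap.sub_apply,
      sub_eq_zero] at h
    exact h
  span_eq_top := by
    set S := Submodule.span F (_ : Set V)
    have fixed_le (c : K) (hc : ∀ i, c • (b i : K) • a ∈ S) (k : K) (hk : σ k = k) :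
        c • k • a ∈ S := by
      let L : AlgHom.equalizer σ (AlgHom.id F K) →ₗ[F] V := Algebra.lsmul F F V c ∘ₗ
        (LinearMap.toSpanSingleton K V a).restrictScalars F ∘ₗ
          (Subalgebra.val _).toLinearMap
      have hL : Submodule.span F (Set.range b) ≤ S.comap L :=
        Submodule.span_le.mpr (by rintro _ ⟨i, rfl⟩; exact hc i)
      exact hL (b.mem_span ⟨k, hk⟩)
    refine eq_top_iff.mpr fun v _ => ?_
    obtain ⟨f, rfl⟩ := Submodule.mem_span_singleton.mp (hspan ▸ Submodule.mem_top (x := v))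
    obtain ⟨k, l, hk, hl, rfl⟩ := exists_fixed_add_mul_of_involutive hσ hne f
    rw [add_smul, mul_smul, ← one_smul K (k • a)]
    exact S.add_mem
      (fixed_le 1 (fun i => by rw [one_smul]; exact Submodule.subset_span (.inl ⟨i, rfl⟩)) k hk)
      (fixed_le e (fun i => Submodule.subset_span (.inr ⟨i, rfl⟩)) l hl)

theorem exists_orthogonal_basis_fixed [FiniteDimensional F K]
    (hBσ : ∀ (k : K) (u v : V), B (k • u) v = B u (σ k • v)) {a : V} (ha : B (e • a) a ≠ 0) :
    ∃ (n : ℕ) (b : Basis (Fin n) F (AlgHom.equalizer σ (AlgHom.id F K))),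
      (∀ i j, i ≠ j → B (e • (b i : K) • a) ((b j : K) • a) = 0) ∧
      ∀ i, B (e • (b i : K) • a) ((b i : K) • a) ≠ 0 := by
  let K₀ := AlgHom.equalizer σ (AlgHom.id F K)
  let L : K₀ →ₗ[F] V := (LinearMap.toSpanSingleton K V a).restrictScalars F ∘ₗ K₀.val.toLinearMap
  let C : BilinForm F K₀ := B.comp (Algebra.lsmul F F V e ∘ₗ L) L
  have hC (k l : K₀) : C k l = B (e • ((k * l : K₀) : K) • a) a := by
    change B (e • (k : K) • a) ((l : K) • a) = _
    rw [← show σ l = l from l.2, ← hBσ, smul_comm (l : K), smul_smul (l : K), mul_comm (l : K),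
      MulMemClass.coe_mul]
  have hsymm : C.IsSymm := ⟨fun k l => by rw [hC, hC, mul_comm]⟩
  have hnd : C.Nondegenerate := by
    refine (LinearMap.IsRefl.nondegenerate_iff_separatingLeft hsymm.isRefl).mpr fun k hk => ?_
    by_contra hk0
    have hinv : σ (k : K)⁻¹ = (k : K)⁻¹ := by rw [map_inv₀, show σ k = k from k.2]
    refine ha ?_
    have := hk ⟨_, hinv⟩
    rw [hC, MulMemClass.coe_mul, mul_inv_cancel₀ (fun h => hk0 (Subtype.ext h)), one_smul] at this
    exact this
  obtain ⟨b, hb⟩ := exists_orthogonal_basis_of_apply_self_ne_zero hsymm hnd (a := 1)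
    (by rwa [hC, one_mul, OneMemClass.coe_one, one_smul])
  exact ⟨_, b, fun i j hij => hb hij, fun i => hb.not_isOrtho_basis_self_of_nondegenerate hnd i⟩

theorem exists_isPolarFrame_lsmul_of_span_singleton [FiniteDimensional F K] (hB : B.IsAlt)
    (hσ : Function.Involutive σ) (hBσ : ∀ (k : K) (u v : V), B (k • u) v = B u (σ k • v))
    (he : e + σ e = 1) (hne : e ≠ σ e) {a : V} (ha : B (e • a) a ≠ 0)
    (hspan : Submodule.span K {a} = ⊤) :
    ∃ (n : ℕ) (b : Fin n → V), IsPolarFrame B (Algebra.lsmul F F V e) b := by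
  obtain ⟨n, b, horth, hself⟩ := exists_orthogonal_basis_fixed hBσ ha
  exact ⟨n, _, isPolarFrame_smul_of_basis_fixed hB hσ hBσ he hne hspan b horth hself⟩

theorem restrict_span_singleton_nondegenerate [FiniteDimensional F V] (hB : B.IsAlt)
    (hBσ : ∀ (k : K) (u v : V), B (k • u) v = B u (σ k • v)) {a : V} (ha : B (e • a) a ≠ 0) :
    (B.restrict ((Submodule.span K {a}).restrictScalars F)).Nondegenerate := by
  refine (LinearMap.IsRefl.nondegenerate_iff_separatingLeft (B := B.restrict _)
    fun u v => hB.isRefl u v).mpr ?_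
  rintro ⟨x, hx⟩ hker
  obtain ⟨k, rfl⟩ := Submodule.mem_span_singleton.mp hx
  by_contra hne
  have hk : k ≠ 0 := by
    rintro rfl
    exact hne (Subtype.ext (zero_smul K a))
  refine ha ?_
  have := hker ⟨_, Submodule.smul_mem _ (σ (e * k⁻¹)) (Submodule.mem_span_singleton_self a)⟩
  change B (k • a) (σ (e * k⁻¹) • a) = 0 at this
  rwa [← hBσ, smul_smul, inv_mul_cancel_right₀ hk] at this

theorem exists_isPolarFrame_lsmul [FiniteDimensional F K] [FiniteDimensional F V] (hB : B.IsAlt)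
    (hnd : B.Nondegenerate) (hσ : Function.Involutive σ)
    (hBσ : ∀ (k : K) (u v : V), B (k • u) v = B u (σ k • v)) (he : e + σ e = 1)
    (hne : e ≠ σ e) :
    ∃ (n : ℕ) (b : Fin n → V), IsPolarFrame B (Algebra.lsmul F F V e) b := by
  induction hd : finrank F V using Nat.strong_induction_on generalizing V with
  | _ d ih =>
  subst hd
  cases subsingleton_or_nontrivial V
  · exact ⟨0, isEmptyElim, .of_subsingleton _⟩
  obtain ⟨a, ha⟩ := exists_smul_apply_self_ne_zero hB hnd hBσ hne
  let U : Submodule K V := Submodule.span K {a}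
  let W : Submodule K V :=
    { B.orthogonal (U.restrictScalars F) with
      smul_mem' k w hw u hu := by
        have := hw _ (U.smul_mem (σ k) hu)
        rwa [hBσ, hσ] at this }
  have hUW : IsCompl (U.restrictScalars F) (W.restrictScalars F) :=
    isCompl_orthogonal_of_restrict_nondegenerate hB.isRefl
      (restrict_span_singleton_nondegenerate hB hBσ ha)
  have hspan : Submodule.span K {(⟨a, Submodule.mem_span_singleton_self a⟩ :
      U.restrictScalars F)} = ⊤ := by
    refine eq_top_iff.mpr fun ⟨x, hx⟩ _ => ?_
    obtain ⟨k, rfl⟩ := Submodule.mem_span_singleton.mp hx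
    exact Submodule.mem_span_singleton.mpr ⟨k, rfl⟩
  obtain ⟨m, b, hb⟩ := exists_isPolarFrame_lsmul_of_span_singleton
    (B := B.restrict (U.restrictScalars F)) (fun x => hB x) hσ (fun k u v => hBσ k u v) he hne
    ha hspan
  have hlt : finrank F (W.restrictScalars F) < finrank F V := by
    refine Submodule.finrank_lt fun h => ?_
    have hU : U.restrictScalars F = ⊥ := eq_bot_of_isCompl_top (h ▸ hUW)
    obtain rfl : a = 0 := (Submodule.mem_bot F).mp (hU ▸ Submodule.mem_span_singleton_self a)
    exact ha (map_zero _)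
  obtain ⟨n, c, hc⟩ := ih _ hlt (B := B.restrict (W.restrictScalars F)) (fun x => hB x)
    (restrict_orthogonal_nondegenerate hB.isRefl hnd hUW) (fun k u v => hBσ k u v) rfl
  exact ⟨m + n, _, (hb.sumElim hUW.codisjoint hB.isRefl le_rfl (fun _ => rfl) (fun _ => rfl)
    hc).reindex finSumFinEquiv.symm⟩

end HermitianFrame

section TransposeTrace

theorem trace_eq_trace_mul_of_apply_eq_mul_transpose_mul {F n : Type*} [CommRing F] [Fintype n]
    {X Y : Matrix n n F} {T : Module.End F (Matrix n n F)}
    (hT : ∀ M, T M = X * Mᵀ * Y) : LinearMap.trace F _ T = (X * Yᵀ).trace := by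
  classical
  rw [LinearMap.trace_eq_matrix_trace F (Matrix.stdBasis F n n), Matrix.trace,
    Fintype.sum_prod_type]
  refine Finset.sum_congr rfl fun i _ => Finset.sum_congr rfl fun j _ => ?_
  rw [diag_apply, LinearMap.toMatrix_apply, stdBasis_eq_single, hT, transpose_single]
  change (X * single j i 1 * Y : Matrix n n F) i j = _
  simp [mul_apply, single_apply, ite_and]

theorem trace_eq_trace_mul_of_apply_eq_flip {F V : Type*} [Field F] [AddCommGroup V] [Module F V]
    [FiniteDimensional F V] {X Y : Module.End F V} {T : Module.End F (BilinForm F V)}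
    (hT : ∀ C u v, T C u v = C (X v) (Y u)) :
    LinearMap.trace F _ T = LinearMap.trace F V (X * Y) := by
  let b := finBasis F V
  have key (M) : (toMatrix b).conj T M =
      (LinearMap.toMatrix b b Y)ᵀ * Mᵀ * LinearMap.toMatrix b b X := by
    obtain ⟨C, rfl⟩ := (toMatrix b).surjective M
    have hTC : T C = BilinForm.comp (BilinForm.flip C) Y X := LinearMap.ext₂ fun u v => hT C u v
    have hflip : toMatrix b (BilinForm.flip C) = (toMatrix b C)ᵀ := by
      ext i j
      simp only [LinearMap.BilinForm.toMatrix_apply, transpose_apply, flip_apply]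
    rw [LinearEquiv.conj_apply_apply, LinearEquiv.symm_apply_apply, hTC, toMatrix_comp b b, hflip]
  refine (LinearMap.trace_conj' (M := BilinForm F V) (N := Matrix _ _ F) T
    (toMatrix b)).symm.trans ?_
  rw [trace_eq_trace_mul_of_apply_eq_mul_transpose_mul key, ← transpose_mul, trace_transpose,
    ← LinearMap.toMatrix_mul, ← LinearMap.trace_eq_matrix_trace]

end TransposeTrace

section FrobeniusSchur

variable {F V G : Type*} [Field F] [AddCommGroup V] [Module F V] [Group G]
  {ρ : Representation F G V} {B : BilinForm F V}

/-- The algebra of endomorphisms of a representation, as a subalgebra of all linear endomorphisms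
so that it acts on the underlying space. -/
abbrev commutant (ρ : Representation F G V) : Subalgebra F (Module.End F V) :=
  Subalgebra.centralizer F (Set.range ρ)

theorem mem_commutant_iff {f : Module.End F V} :
    f ∈ commutant ρ ↔ ∀ g v, f (ρ g v) = ρ g (f v) := by
  simp only [Subalgebra.mem_centralizer_iff, Set.forall_mem_range, LinearMap.ext_iff,
    Module.End.mul_apply, eq_comm]

theorem bijective_of_mem_commutant [ρ.IsIrreducible] {f : Module.End F V} (hf : f ∈ commutant ρ)
    (hf0 : f ≠ 0) : Function.Bijective f :=
  (Representation.IsIrreducible.bijective_or_eq_zero (LinearMap.intertwiningMap_of_isIntertwiningMap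
    ρ ρ f (mem_commutant_iff.mp hf))).resolve_right fun h =>
    hf0 (congrArg Representation.IntertwiningMap.toLinearMap h)

theorem nontrivial_of_isIrreducible (ρ : Representation F G V) [ρ.IsIrreducible] : Nontrivial V :=
  IsSimpleModule.nontrivial (MonoidAlgebra F G) ρ.asModule

theorem isField_commutant [Finite F] [FiniteDimensional F V] [ρ.IsIrreducible] :
    IsField (commutant ρ) := by
  have := nontrivial_of_isIrreducible ρ
  have : Finite (commutant ρ) := Module.finite_of_finite F
  have : NoZeroDivisors (commutant ρ) := ⟨fun {f g} hfg => or_iff_not_imp_left.mpr fun hf =>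
    Subtype.ext (LinearMap.ext fun v =>
      (bijective_of_mem_commutant f.2 fun h => hf (Subtype.ext h)).1
        ((LinearMap.congr_fun (congrArg Subtype.val hfg) v).trans (map_zero _).symm))⟩
  have : IsDomain (commutant ρ) := NoZeroDivisors.to_isDomain _
  exact Finite.isDomain_to_isField _

theorem finrank_eq_one_of_isIrreducible_of_forall_eq_one [ρ.IsIrreducible] (h : ∀ g, ρ g = 1) :
    finrank F V = 1 := by
  have := nontrivial_of_isIrreducible ρ
  obtain ⟨v, hv⟩ := exists_ne (0 : V)
  let L : Subrepresentation ρ := ⟨F ∙ v, fun g w hw => by rwa [h, Module.End.one_apply]⟩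
  have hL : (F ∙ v) = ⊤ := congrArg Subrepresentation.toSubmodule <|
    (eq_bot_or_eq_top L).resolve_left fun hbot => hv <|
      (Submodule.span_singleton_eq_bot (R := F)).mp (congrArg Subrepresentation.toSubmodule hbot)
  rw [← finrank_top, ← hL, finrank_span_singleton hv]

theorem not_nondegenerate_of_finrank_eq_one (hB : B.IsAlt) (h : finrank F V = 1) :
    ¬ B.Nondegenerate := fun hnd => by
  obtain ⟨v, hv, hspan⟩ := finrank_eq_one_iff'.mp h
  refine hv (hnd.1 v fun w => ?_)
  obtain ⟨c, rfl⟩ := hspan w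
  rw [map_smul, hB v, smul_zero]

theorem sum_eq_zero_of_isIrreducible [Fintype G] [ρ.IsIrreducible] (h : finrank F V ≠ 1) :
    ∑ g, ρ g = 0 := by
  have hmul_left (g : G) : ρ g * ∑ x, ρ x = ∑ x, ρ x := by
    rw [Finset.mul_sum]
    exact Fintype.sum_equiv (Equiv.mulLeft g) _ _ fun x => (map_mul ρ g x).symm
  have hmul_right (g : G) : (∑ x, ρ x) * ρ g = ∑ x, ρ x := by
    rw [Finset.sum_mul]
    exact Fintype.sum_equiv (Equiv.mulRight g) _ _ fun x => (map_mul ρ x g).symm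
  by_contra hne
  have hmem : ∑ g, ρ g ∈ commutant ρ := mem_commutant_iff.mpr fun g =>
    LinearMap.congr_fun ((hmul_right g).trans (hmul_left g).symm)
  refine h (finrank_eq_one_of_isIrreducible_of_forall_eq_one fun g => LinearMap.ext fun v =>
    (bijective_of_mem_commutant hmem hne).1 (LinearMap.congr_fun (hmul_right g) v))

theorem sum_sq_eq_zero_of_isIrreducible [Fintype G] [ρ.IsIrreducible] (h : finrank F V ≠ 1)
    (hG : Odd (Nat.card G)) : ∑ g, ρ (g ^ 2) = 0 := by
  rw [← sum_eq_zero_of_isIrreducible h (ρ := ρ)]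
  exact Fintype.sum_equiv (powCoprime hG.coprime_two_right) _ _ fun _ => rfl

theorem exists_trace_mulLeft_ne_zero {E : Type*} [Ring E] [Algebra F E] [Finite F]
    [FiniteDimensional F E] (hE : IsField E) :
    ∃ a : E, LinearMap.trace F E (LinearMap.mulLeft F a) ≠ 0 := by
  let _ : Field E := hE.toField
  by_contra! h
  exact Algebra.trace_ne_zero F E (LinearMap.ext h)

theorem leftAdjoint_mem_commutant (hnd : B.Nondegenerate)
    (hρ : ∀ g u v, B (ρ g u) (ρ g v) = B u v) {f t : Module.End F V} (hf : f ∈ commutant ρ)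
    (ht : ∀ u v, B (t u) v = B u (f v)) : t ∈ commutant ρ := by
  refine mem_commutant_iff.mpr fun g u => sub_eq_zero.mp (hnd.1 _ fun v => ?_)
  have hinv (x y : V) : B (ρ g x) y = B x (ρ g⁻¹ y) := by rw [← hρ g x, ρ.self_inv_apply]
  rw [map_sub, LinearMap.sub_apply, sub_eq_zero, ht, hinv, hinv, ht, mem_commutant_iff.mp hf]

theorem mem_commutant_of_forall_apply_eq_sum [Fintype G] (hnd : B.Nondegenerate)
    (hρ : ∀ g u v, B (ρ g u) (ρ g v) = B u v) {a : Module.End F V} (ha : a ∈ commutant ρ)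
    {f t : Module.End F V} (ht : ∀ u v, B (t u) v = ∑ g, B (f (ρ g v)) (ρ g (a u))) :
    t ∈ commutant ρ := by
  refine mem_commutant_iff.mpr fun h u => sub_eq_zero.mp (hnd.1 _ fun v => ?_)
  have hinv : B (ρ h (t u)) v = B (t u) (ρ h⁻¹ v) := by
    rw [← hρ h (t u), ρ.self_inv_apply]
  rw [map_sub, LinearMap.sub_apply, sub_eq_zero, hinv, ht, ht]
  refine Fintype.sum_equiv (Equiv.mulRight h) _ _ fun g => ?_
  rw [Equiv.coe_mulRight, map_mul, mem_commutant_iff.mp ha, Module.End.mul_apply,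
    Module.End.mul_apply, ρ.self_inv_apply]

theorem eq_smul_mul_of_forall_apply_eq_sum [Fintype G] (hB : B.IsAlt) (hnd : B.Nondegenerate)
    (hρ : ∀ g u v, B (ρ g u) (ρ g v) = B u v) {a f t : Module.End F V}
    (hf : f ∈ commutant ρ) (hadj : ∀ u v, B (f u) v = B u (f v))
    (ht : ∀ u v, B (t u) v = ∑ g, B (f (ρ g v)) (ρ g (a u))) :
    t = -(Nat.card G : F) • (f * a) := by
  refine LinearMap.ext fun u => sub_eq_zero.mp (hnd.1 _ fun v => ?_)
  have hterm (g : G) : B (f (ρ g v)) (ρ g (a u)) = -B (f (a u)) v := by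
    rw [mem_commutant_iff.mp hf, hρ, hadj (a u), hB.neg_eq]
  rw [map_sub, LinearMap.sub_apply, sub_eq_zero, ht, Finset.sum_congr rfl fun g _ => hterm g]
  simp [Nat.card_eq_fintype_card]

variable [FiniteDimensional F V]

theorem exists_adjoint_commutant (hcomm : ∀ f g : commutant ρ, f * g = g * f) (hB : B.IsAlt)
    (hnd : B.Nondegenerate) (hρ : ∀ g u v, B (ρ g u) (ρ g v) = B u v) :
    ∃ σ : commutant ρ →ₐ[F] commutant ρ, Function.Involutive σ ∧
      ∀ (k : commutant ρ) u v, B (k • u) v = B u (σ k • v) := by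
  have hadj (f : commutant ρ) : ∃ t : commutant ρ, ∀ u v, B (t • u) v = B u (f • v) :=
    ⟨⟨_, leftAdjoint_mem_commutant hnd hρ f.2
      (B.isAdjointPairLeftAdjointOfNondegenerate hnd f)⟩,
      B.isAdjointPairLeftAdjointOfNondegenerate hnd f⟩
  choose σ hσ using hadj
  have hσ' (f : commutant ρ) (u v : V) : B (f • u) v = B u (σ f • v) := by
    rw [← hB.neg_eq, ← hσ, hB.neg_eq]
  have ext {s t : commutant ρ} (h : ∀ u v, B (s • u) v = B (t • u) v) : s = t :=
    Subtype.ext (LinearMap.ext fun u => sub_eq_zero.mp (hnd.1 _ fun v => by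
      rw [map_sub, LinearMap.sub_apply]; exact sub_eq_zero.mpr (h u v)))
  exact ⟨{
    toFun := σ
    map_one' := ext fun u v => by rw [hσ, one_smul, one_smul]
    map_mul' f g := ext fun u v => by rw [hσ, hcomm f g, mul_smul, mul_smul, hσ, hσ]
    map_zero' := ext fun u v => by simp only [hσ, zero_smul, map_zero, LinearMap.zero_apply]
    map_add' f g := ext fun u v => by simp only [hσ, add_smul, map_add, LinearMap.add_apply]
    commutes' c := ext fun u v => by
      simp only [hσ, algebraMap_smul, map_smul, LinearMap.smul_apply] },
    fun f => ext fun u v => (hσ (σ f) u v).trans (hσ' f u v).symm, hσ'⟩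

theorem exists_forall_apply_eq_sum_and_trace_eq [Fintype G] (ρ : Representation F G V)
    (hnd : B.Nondegenerate) (a : Module.End F V) : ∃ T : Module.End F (Module.End F V),
    (∀ f u v, B (T f u) v = ∑ g, B (f (ρ g v)) (ρ g (a u))) ∧
      LinearMap.trace F _ T = LinearMap.trace F V ((∑ g, ρ (g ^ 2)) * a) := by
  obtain ⟨e, he⟩ : ∃ e : Module.End F V ≃ₗ[F] BilinForm F V, ∀ f u v, e f u v = B (f u) v :=
    ⟨(B.toDual hnd).congrRight, fun _ _ _ => rfl⟩
  let S (g : G) : Module.End F (BilinForm F V) :=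
    { toFun C := BilinForm.comp (BilinForm.flip C) (ρ g * a) (ρ g)
      map_add' _ _ := rfl
      map_smul' _ _ := rfl }
  refine ⟨e.symm.conj (∑ g, S g), fun f u v => ?_, ?_⟩
  · have : e (e.symm.conj (∑ g, S g) f) = (∑ g, S g) (e f) := by
      rw [LinearEquiv.conj_apply_apply, LinearEquiv.symm_symm, e.apply_symm_apply]
    rw [← he, this, LinearMap.sum_apply, LinearMap.sum_apply, LinearMap.sum_apply]
    exact Finset.sum_congr rfl fun g _ => he _ _ _
  · refine (LinearMap.trace_conj' (M := BilinForm F V) (N := V →ₗ[F] V) (∑ g, S g) e.symm).trans ?_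
    rw [map_sum, Finset.sum_mul, map_sum]
    refine Finset.sum_congr rfl fun g _ => ?_
    rw [trace_eq_trace_mul_of_apply_eq_flip (X := ρ g) (Y := ρ g * a) fun _ _ _ => rfl, pow_two,
      map_mul ρ, mul_assoc]

theorem exists_mem_commutant_not_selfAdjoint [Finite F] [Finite G] [ρ.IsIrreducible]
    (hG : Odd (Nat.card G)) (hG₀ : (Nat.card G : F) ≠ 0) (hB : B.IsAlt) (hnd : B.Nondegenerate)
    (hρ : ∀ g u v, B (ρ g u) (ρ g v) = B u v) :
    ∃ f ∈ commutant ρ, ∃ u v, B (f u) v ≠ B u (f v) := by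
  have := Fintype.ofFinite G
  by_contra! hadj
  have hE := isField_commutant (ρ := ρ)
  obtain ⟨a, ha⟩ := exists_trace_mulLeft_ne_zero (F := F) hE
  obtain ⟨T, hT, htr⟩ := exists_forall_apply_eq_sum_and_trace_eq ρ hnd (a : Module.End F V)
  have hmem (f) : T f ∈ Subalgebra.toSubmodule (commutant ρ) :=
    mem_commutant_of_forall_apply_eq_sum hnd hρ a.2 (hT f)
  have hzero : LinearMap.trace F _ T = 0 := by
    rw [htr, sum_sq_eq_zero_of_isIrreducible
      (fun h => not_nondegenerate_of_finrank_eq_one hB h hnd) hG, zero_mul, map_zero]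
  have hres : LinearMap.trace F _ (T.restrict fun f _ => hmem f) =
      -(Nat.card G : F) * LinearMap.trace F (commutant ρ) (LinearMap.mulLeft F a) := by
    rw [← smul_eq_mul, ← map_smul]
    refine congrArg (LinearMap.trace F (commutant ρ)) (LinearMap.ext fun f => Subtype.ext ?_)
    have hfa : (f : Module.End F V) * a = a * f := congrArg Subtype.val (hE.mul_comm f a)
    refine (eq_smul_mul_of_forall_apply_eq_sum hB hnd hρ f.2 (hadj f f.2) (hT f)).trans ?_
    rw [hfa]
    rfl
  rw [LinearMap.trace_restrict_eq_of_forall_mem _ T hmem, hzero] at hres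
  exact mul_ne_zero (neg_ne_zero.mpr hG₀) ha hres.symm

theorem exists_isPolarFrame_of_isIrreducible [Finite F] [Finite G] [ρ.IsIrreducible]
    (hG : Odd (Nat.card G)) (hG₀ : (Nat.card G : F) ≠ 0) (hB : B.IsAlt) (hnd : B.Nondegenerate)
    (hρ : ∀ g u v, B (ρ g u) (ρ g v) = B u v) :
    ∃ e ∈ commutant ρ, ∃ (n : ℕ) (a : Fin n → V), IsPolarFrame B e a := by
  have hE := isField_commutant (ρ := ρ)
  obtain ⟨σ, hσ, hBσ⟩ := exists_adjoint_commutant hE.mul_comm hB hnd hρ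
  obtain ⟨f, hf, u, v, hne⟩ := exists_mem_commutant_not_selfAdjoint hG hG₀ hB hnd hρ
  let _ := hE.toField
  have hσ₁ : (σ : commutant ρ →+* commutant ρ) ≠ RingHom.id _ := fun h => hne <|
    (hBσ ⟨f, hf⟩ u v).trans
      (congrArg (fun k : commutant ρ => B u (k • v)) (RingHom.congr_fun h ⟨f, hf⟩))
  obtain ⟨e, he, hne⟩ := exists_add_map_eq_one_of_involutive (σ := σ.toRingHom) hσ hσ₁
  obtain ⟨n, a, ha⟩ := exists_isPolarFrame_lsmul hB hnd hσ hBσ he hne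
  exact ⟨e, e.2, n, a, ha⟩

end FrobeniusSchur

section EquivariantFrame

theorem exists_isAtom_disjoint {α : Type*} [Lattice α] [BoundedOrder α] [ComplementedLattice α]
    [IsAtomic α] {a : α} (ha : a ≠ ⊤) : ∃ b, IsAtom b ∧ Disjoint a b := by
  obtain ⟨c, hac⟩ := exists_isCompl a
  obtain ⟨b, hb, hbc⟩ := (eq_bot_or_exists_atom_le c).resolve_left
    fun hc => ha (by simpa [hc] using hac.sup_eq_top)
  exact ⟨b, hb, hac.disjoint.mono_right hbc⟩

variable {F G V : Type*} [Field F] [Group G] [AddCommGroup V] [Module F V]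
  {ρ : Representation F G V} {B : BilinForm F V}

/-- The orthogonal complement of a subrepresentation with respect to an invariant form. -/
def orthogonalSubrepresentation (hρ : ∀ g u v, B (ρ g u) (ρ g v) = B u v)
    (U : Subrepresentation ρ) : Subrepresentation ρ where
  toSubmodule := B.orthogonal U.toSubmodule
  apply_mem_toSubmodule g v hv u hu := by
    rw [← hρ g⁻¹, ρ.inv_self_apply]
    exact hv _ (U.apply_mem_toSubmodule g⁻¹ hu)

theorem isAtomic_subrepresentation [FiniteDimensional F V] (ρ : Representation F G V) :
    IsAtomic (Subrepresentation ρ) :=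
  have : WellFoundedLT (Subrepresentation ρ) :=
    (show StrictMono (Subrepresentation.toSubmodule (ρ := ρ)) from fun _ _ h => h).wellFoundedLT
  isAtomic_of_orderBot_wellFounded_lt wellFounded_lt

theorem disjoint_toSubmodule {U W : Subrepresentation ρ} (h : Disjoint U W) :
    Disjoint U.toSubmodule W.toSubmodule :=
  disjoint_iff.mpr (congrArg Subrepresentation.toSubmodule h.eq_bot)

theorem le_orthogonal_or_nondegenerate_of_isAtom [FiniteDimensional F V] (hB : B.IsRefl)
    (hρ : ∀ g u v, B (ρ g u) (ρ g v) = B u v) {U : Subrepresentation ρ} (hU : IsAtom U) :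
    U.toSubmodule ≤ B.orthogonal U.toSubmodule ∨ (B.restrict U.toSubmodule).Nondegenerate := by
  let U' := orthogonalSubrepresentation hρ U
  rcases hU.le_iff.mp (inf_le_left : U ⊓ U' ≤ U) with h | h
  · rw [restrict_nondegenerate_iff_isCompl_orthogonal hB, isCompl_orthogonal_iff_disjoint hB]
    exact .inr (disjoint_toSubmodule (disjoint_iff.mpr h))
  · exact .inl (inf_eq_left.mp (congrArg Subrepresentation.toSubmodule h))

theorem ofIsCompl_mem_commutant {U W : Subrepresentation ρ}
    (h : IsCompl U.toSubmodule W.toSubmodule) {f : Module.End F U.toSubmodule}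
    {g : Module.End F W.toSubmodule} (hf : f ∈ commutant U.toRepresentation)
    (hg : g ∈ commutant W.toRepresentation) :
    LinearMap.ofIsCompl h (U.toSubmodule.subtype ∘ₗ f) (W.toSubmodule.subtype ∘ₗ g) ∈
      commutant ρ := by
  refine mem_commutant_iff.mpr fun x v => ?_
  obtain ⟨u, hu, w, hw, rfl⟩ := Submodule.mem_sup.mp (h.sup_eq_top ▸ Submodule.mem_top (x := v))
  have hleft := LinearMap.ofIsCompl_apply_left (h := h) (φ := U.toSubmodule.subtype ∘ₗ f)
    (ψ := W.toSubmodule.subtype ∘ₗ g)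
  have hright := LinearMap.ofIsCompl_apply_right (h := h) (φ := U.toSubmodule.subtype ∘ₗ f)
    (ψ := W.toSubmodule.subtype ∘ₗ g)
  simp only [map_add]
  refine congrArg₂ (· + ·) ?_ ?_
  · rw [hleft ⟨u, hu⟩, hleft ⟨ρ x u, U.apply_mem_toSubmodule x hu⟩]
    exact congrArg Subtype.val (mem_commutant_iff.mp hf x ⟨u, hu⟩)
  · rw [hright ⟨w, hw⟩, hright ⟨ρ x w, W.apply_mem_toSubmodule x hw⟩]
    exact congrArg Subtype.val (mem_commutant_iff.mp hg x ⟨w, hw⟩)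

theorem exists_isPolarFrame_of_isCompl {U W : Subrepresentation ρ}
    (h : IsCompl U.toSubmodule W.toSubmodule) (hB : B.IsRefl)
    (horth : W.toSubmodule ≤ B.orthogonal U.toSubmodule)
    (hU : ∃ e ∈ commutant U.toRepresentation, ∃ (n : ℕ) (a : Fin n → U.toSubmodule),
      IsPolarFrame (B.restrict U.toSubmodule) e a)
    (hW : ∃ e ∈ commutant W.toRepresentation, ∃ (n : ℕ) (a : Fin n → W.toSubmodule),
      IsPolarFrame (B.restrict W.toSubmodule) e a) :
    ∃ e ∈ commutant ρ, ∃ (n : ℕ) (a : Fin n → V), IsPolarFrame B e a := by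
  obtain ⟨f, hf, m, a, ha⟩ := hU
  obtain ⟨g, hg, n, b, hb⟩ := hW
  exact ⟨_, ofIsCompl_mem_commutant h hf hg, m + n, _,
    (ha.sumElim h.codisjoint hB horth (fun u => LinearMap.ofIsCompl_apply_left h u)
      (fun w => LinearMap.ofIsCompl_apply_right h w) hb).reindex finSumFinEquiv.symm⟩

theorem exists_isPolarFrame_of_isCompl_of_le_orthogonal [FiniteDimensional F V]
    {U Y : Subrepresentation ρ} (h : IsCompl U.toSubmodule Y.toSubmodule) (hB : B.IsAlt)
    (hnd : B.Nondegenerate) (hU : U.toSubmodule ≤ B.orthogonal U.toSubmodule)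
    (hY : Y.toSubmodule ≤ B.orthogonal Y.toSubmodule) :
    ∃ e ∈ commutant ρ, ∃ (n : ℕ) (a : Fin n → V), IsPolarFrame B e a :=
  ⟨_, ofIsCompl_mem_commutant h (one_mem _) (zero_mem _), _,
    exists_isPolarFrame_of_codisjoint_isotropic hB hnd h.codisjoint hU hY
      (fun u hu => LinearMap.ofIsCompl_apply_left h ⟨u, hu⟩)
      fun y hy => LinearMap.ofIsCompl_apply_right h ⟨y, hy⟩⟩

theorem restrict_sup_nondegenerate [FiniteDimensional F V] (hB : B.IsRefl) {U Y : Submodule F V}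
    (hU : U ≤ B.orthogonal U) (hY : Y ≤ B.orthogonal Y) (hUY : Disjoint U (B.orthogonal Y))
    (hYU : Disjoint Y (B.orthogonal U)) : (B.restrict (U ⊔ Y)).Nondegenerate := by
  rw [restrict_nondegenerate_iff_isCompl_orthogonal hB, isCompl_orthogonal_iff_disjoint hB,
    Submodule.disjoint_def]
  intro v hv hv'
  obtain ⟨u, hu, y, hy, rfl⟩ := Submodule.mem_sup.mp hv
  have hu0 : u = 0 := Submodule.disjoint_def.mp hUY u hu fun z hz => by
    have : B z (u + y) = 0 := hv' z (Submodule.mem_sup_right hz)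
    rwa [map_add, hY hy z hz, add_zero] at this
  have hy0 : y = 0 := Submodule.disjoint_def.mp hYU y hy fun z hz => by
    have : B z (u + y) = 0 := hv' z (Submodule.mem_sup_left hz)
    rwa [map_add, hU hu z hz, zero_add] at this
  rw [hu0, hy0, add_zero]

theorem exists_isPolarFrame_of_forall_degenerate [Finite F] [Finite G] [FiniteDimensional F V]
    [Nontrivial V] (hG : Odd (Nat.card G)) (hG₀ : (Nat.card G : F) ≠ 0) (hB : B.IsAlt)
    (hnd : B.Nondegenerate) (hρ : ∀ g u v, B (ρ g u) (ρ g v) = B u v)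
    (hdeg : ∀ W : Subrepresentation ρ, W ≠ ⊥ → (B.restrict W.toSubmodule).Nondegenerate → W = ⊤) :
    ∃ e ∈ commutant ρ, ∃ (n : ℕ) (a : Fin n → V), IsPolarFrame B e a := by
  have : NeZero (Nat.card G : F) := ⟨hG₀⟩
  have := isAtomic_subrepresentation ρ
  have isotropic {U : Subrepresentation ρ} (hU : IsAtom U) (htop : U ≠ ⊤) :
      U.toSubmodule ≤ B.orthogonal U.toSubmodule :=
    (le_orthogonal_or_nondegenerate_of_isAtom hB.isRefl hρ hU).resolve_right
      fun h => htop (hdeg U hU.ne_bot h)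
  obtain ⟨U, hU, -⟩ := exists_isAtom_disjoint (a := (⊥ : Subrepresentation ρ)) fun h =>
    bot_ne_top (congrArg Subrepresentation.toSubmodule h)
  rcases eq_or_ne U ⊤ with rfl | htop
  · have : ρ.IsIrreducible := isSimpleOrder_iff_isAtom_top.mpr hU
    exact exists_isPolarFrame_of_isIrreducible hG hG₀ hB hnd hρ
  have hUU := isotropic hU htop
  obtain ⟨Y, hY, hUY⟩ := exists_isAtom_disjoint (a := orthogonalSubrepresentation hρ U) fun h =>
    hU.ne_bot <| Subrepresentation.toSubmodule_injective <| (Submodule.eq_bot_iff _).mpr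
      fun u hu => hnd.1 u fun v => (h.ge trivial : v ∈ orthogonalSubrepresentation hρ U) u hu
  have hYU : Disjoint U (orthogonalSubrepresentation hρ Y) := hU.not_le_iff_disjoint.mp fun h =>
    hY.not_le_iff_disjoint.mpr hUY.symm fun y hy u hu => hB.isRefl _ _ (h hu y hy)
  have hYY := isotropic hY fun h =>
    hU.ne_bot (hUY.mono_left (show U ≤ orthogonalSubrepresentation hρ U from hUU)
      |>.eq_bot_of_le (h ▸ le_top))
  have hsup : U ⊔ Y = ⊤ := hdeg _ (fun h => hU.ne_bot (le_bot_iff.mp (le_sup_left.trans h.le)))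
    (restrict_sup_nondegenerate hB.isRefl hUU hYY (disjoint_toSubmodule hYU)
      (disjoint_toSubmodule hUY.symm))
  exact exists_isPolarFrame_of_isCompl_of_le_orthogonal
    ⟨(disjoint_toSubmodule hYU).mono_right hYY,
      codisjoint_iff.mpr (congrArg Subrepresentation.toSubmodule hsup)⟩ hB hnd hUU hYY

theorem exists_isPolarFrame_commutant [Finite F] [Finite G] [FiniteDimensional F V]
    (hG : Odd (Nat.card G)) (hG₀ : (Nat.card G : F) ≠ 0) (hB : B.IsAlt) (hnd : B.Nondegenerate)
    (hρ : ∀ g u v, B (ρ g u) (ρ g v) = B u v) :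
    ∃ e ∈ commutant ρ, ∃ (n : ℕ) (a : Fin n → V), IsPolarFrame B e a := by
  induction h : finrank F V using Nat.strong_induction_on generalizing V with
  | _ d ih =>
  subst h
  rcases subsingleton_or_nontrivial V with _ | _
  · exact ⟨0, zero_mem _, 0, Fin.elim0, .of_subsingleton _⟩
  by_cases hdeg : ∀ W : Subrepresentation ρ, W ≠ ⊥ →
      (B.restrict W.toSubmodule).Nondegenerate → W = ⊤
  · exact exists_isPolarFrame_of_forall_degenerate hG hG₀ hB hnd hρ hdeg
  push Not at hdeg
  obtain ⟨W, hbot, hW, htop⟩ := hdeg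
  have hcompl : IsCompl W.toSubmodule (orthogonalSubrepresentation hρ W).toSubmodule :=
    (restrict_nondegenerate_iff_isCompl_orthogonal hB.isRefl).mp hW
  have frame {X : Subrepresentation ρ} (hX : X.toSubmodule ≠ ⊤)
      (hXnd : (B.restrict X.toSubmodule).Nondegenerate) :=
    ih _ (Submodule.finrank_lt hX) (ρ := X.toRepresentation) (B := B.restrict X.toSubmodule)
      (fun x => hB x) hXnd (fun g u v => hρ g u v) rfl
  exact exists_isPolarFrame_of_isCompl hcompl hB.isRefl le_rfl
    (frame (fun h => htop (Subrepresentation.toSubmodule_injective h)) hW)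
    (frame (fun h => hbot (Subrepresentation.toSubmodule_injective
      (eq_bot_of_isCompl_top (h ▸ hcompl))))
      (restrict_orthogonal_nondegenerate hB.isRefl hnd hcompl))

end EquivariantFrame

section FrameOperators

variable {F V ι : Type*} [Field F] [AddCommGroup V] [Module F V] [Fintype ι]
  {B : BilinForm F V} {e : Module.End F V} {a : ι → V} {S : Matrix ι ι F}

/-- The endomorphism `v ↦ ∑ i j, S i j • B v (a i) • a j`. If `a` is totally isotropic and `S` is
symmetric, it squares to zero and is skew-adjoint, so adding `1` gives a unipotent isometry. -/
def frameEnd (B : BilinForm F V) (a : ι → V) (S : Matrix ι ι F) : Module.End F V :=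
  ∑ i, (BilinForm.flip B (a i)).smulRight (∑ j, S i j • a j)

theorem frameEnd_apply (v : V) : frameEnd B a S v = ∑ i, B v (a i) • ∑ j, S i j • a j := by
  simp only [frameEnd, LinearMap.sum_apply, LinearMap.smulRight_apply, flip_apply]

theorem frameEnd_apply_self (ha : ∀ i j, B (a i) (a j) = 0) (i : ι) :
    frameEnd B a S (a i) = 0 := by
  simp only [frameEnd_apply, ha, zero_smul, Finset.sum_const_zero]

theorem frameEnd_mul_self (ha : ∀ i j, B (a i) (a j) = 0) :
    frameEnd B a S * frameEnd B a S = 0 := by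
  refine LinearMap.ext fun v => ?_
  simp only [Module.End.mul_apply, frameEnd_apply v, map_sum, map_smul, frameEnd_apply_self ha,
    smul_zero, Finset.sum_const_zero, LinearMap.zero_apply]

theorem apply_frameEnd_left (hB : B.IsAlt) (hS : S.IsSymm) (u v : V) :
    B (frameEnd B a S u) v = -B u (frameEnd B a S v) := by
  simp only [frameEnd_apply, map_sum, map_smul, LinearMap.sum_apply, LinearMap.smul_apply,
    smul_eq_mul, Finset.mul_sum, ← hB.neg_eq v, ← Finset.sum_neg_distrib]
  rw [Finset.sum_comm]
  refine Finset.sum_congr rfl fun i _ => Finset.sum_congr rfl fun j _ => ?_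
  rw [hS.apply]
  ring

theorem exists_isometry_of_skewAdjoint {N : Module.End F V} (hN : N * N = 0)
    (hskew : ∀ u v, B (N u) v = -B u (N v)) : ∃ x : (Module.End F V)ˣ,
    (x : Module.End F V) = 1 + N ∧ (↑x⁻¹ : Module.End F V) = 1 - N ∧
      ∀ u v, B (x.1 u) (x.1 v) = B u v := by
  refine ⟨⟨1 + N, 1 - N, by simp [mul_sub, add_mul, hN], by simp [mul_add, sub_mul, hN]⟩,
    rfl, rfl, fun u v => ?_⟩
  have hNN : B (N u) (N v) = 0 := by
    rw [hskew, ← Module.End.mul_apply, hN, LinearMap.zero_apply, map_zero, neg_zero]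
  simp [hskew u v, hNN]

/-- The change `x * e * x⁻¹ - e` in `e` under conjugation by the unipotent isometry
`x = 1 + frameEnd B a S`. -/
def frameDefect (B : BilinForm F V) (e : Module.End F V) (a : ι → V) (S : Matrix ι ι F) :
    Module.End F V :=
  (1 + frameEnd B a S) * e * (1 - frameEnd B a S) - e

theorem frameDefect_apply (v : V) : frameDefect B e a S v = frameEnd B a S (e v) -
    e (frameEnd B a S v) - frameEnd B a S (e (frameEnd B a S v)) := by
  simp only [frameDefect, LinearMap.sub_apply, Module.End.mul_apply, LinearMap.add_apply,
    Module.End.one_apply, map_sub]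
  abel

namespace IsPolarFrame

theorem apply_sum (ha : IsPolarFrame B e a) (c : ι → F) (j : ι) :
    B (e (∑ i, c i • a i)) (a j) = c j * B (e (a j)) (a j) := by
  simp only [map_sum, map_smul, LinearMap.sum_apply, LinearMap.smul_apply, smul_eq_mul]
  exact Finset.sum_eq_single j (fun i _ hij => by rw [ha.orthogonal hij, mul_zero])
    fun h => (h (Finset.mem_univ j)).elim

theorem frameEnd_apply_apply (ha : IsPolarFrame B e a) (i : ι) :
    frameEnd B a S (e (a i)) = B (e (a i)) (a i) • ∑ j, S i j • a j := by
  rw [frameEnd_apply]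
  exact Finset.sum_eq_single i (fun j _ hij => by rw [ha.orthogonal hij.symm, zero_smul])
    fun h => (h (Finset.mem_univ i)).elim

theorem frameDefect_apply_self (ha : IsPolarFrame B e a) (i : ι) :
    frameDefect B e a S (a i) = B (e (a i)) (a i) • ∑ j, S i j • a j := by
  rw [frameDefect_apply, frameEnd_apply_self ha.isotropic, ha.frameEnd_apply_apply, map_zero,
    map_zero, sub_zero, sub_zero]

theorem frameDefect_apply_apply (ha : IsPolarFrame B e a) (i : ι) :
    frameDefect B e a S (e (a i)) = B (e (a i)) (a i) • (∑ j, S i j • a j - e (∑ j, S i j • a j) -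
      ∑ j, (S i j * B (e (a j)) (a j)) • ∑ k, S j k • a k) := by
  have hsq : frameEnd B a S (e (e (a i))) = frameEnd B a S (e (a i)) := by
    simp only [frameEnd_apply, ha.apply_sq]
  have hsum : frameEnd B a S (e (∑ j, S i j • a j)) =
      ∑ j, (S i j * B (e (a j)) (a j)) • ∑ k, S j k • a k := by
    simp only [map_sum, map_smul, ha.frameEnd_apply_apply, smul_smul]
  rw [frameDefect_apply, hsq, ha.frameEnd_apply_apply, map_smul, map_smul, hsum, smul_sub, smul_sub]

variable [DecidableEq ι]

theorem frameEnd_single_apply (i : ι) (v : V) :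
    frameEnd B a (Matrix.single i i 1) v = B v (a i) • a i := by
  simp [frameEnd_apply, Matrix.single_apply, ite_and]

theorem frameDefect_single_apply (i : ι) (v : V) :
    frameDefect B e a (Matrix.single i i 1) v =
      (B (e v) (a i) - B v (a i) * B (e (a i)) (a i)) • a i - B v (a i) • e (a i) := by
  simp only [frameDefect_apply, frameEnd_single_apply, map_smul]
  module

theorem frameDefect_single_apply_sum (ha : IsPolarFrame B e a) (i : ι) (c : ι → F) :
    frameDefect B e a (Matrix.single i i 1) (∑ j, c j • a j) =
      (c i * B (e (a i)) (a i)) • a i := by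
  have hzero : B (∑ j, c j • a j) (a i) = 0 := by
    simp only [map_sum, map_smul, LinearMap.sum_apply, LinearMap.smul_apply, ha.isotropic,
      smul_zero, Finset.sum_const_zero]
  rw [frameDefect_single_apply, hzero, ha.apply_sum, zero_mul, sub_zero, zero_smul, sub_zero]

theorem frameDefect_single_apply_apply_sum (ha : IsPolarFrame B e a) {i : ι} {c : ι → F}
    (hc : c i = 0) : frameDefect B e a (Matrix.single i i 1) (e (∑ j, c j • a j)) = 0 := by
  have hsq : B (e (e (∑ j, c j • a j))) (a i) = B (e (∑ j, c j • a j)) (a i) := by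
    simp only [map_sum, map_smul, LinearMap.sum_apply, LinearMap.smul_apply, ha.apply_sq]
  rw [frameDefect_single_apply, hsq, ha.apply_sum, hc]
  simp only [zero_mul, sub_zero, zero_smul]

theorem frameDefect_single_mul_mul_apply (ha : IsPolarFrame B e a) {i : ι} (hS : S i i = 0)
    (v : V) :
    (frameDefect B e a (Matrix.single i i 1) * frameDefect B e a S *
      frameDefect B e a (Matrix.single i i 1)) v =
      (B (e (a i)) (a i) ^ 2 * (∑ j, S i j * B (e (a j)) (a j) * S j i) * B v (a i)) • a i := by
  have hrow (j : ι) : frameDefect B e a (Matrix.single i i 1) (∑ k, S j k • a k) =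
      (S j i * B (e (a i)) (a i)) • a i := ha.frameDefect_single_apply_sum i _
  have hself : frameDefect B e a (Matrix.single i i 1) (frameDefect B e a S (a i)) = 0 := by
    rw [ha.frameDefect_apply_self, map_smul, hrow, hS, zero_mul, zero_smul, smul_zero]
  have himage : frameDefect B e a (Matrix.single i i 1) (frameDefect B e a S (e (a i))) =
      -(B (e (a i)) (a i) ^ 2 * ∑ j, S i j * B (e (a j)) (a j) * S j i) • a i := by
    rw [ha.frameDefect_apply_apply, map_smul, map_sub, map_sub, hrow, hS,
      ha.frameDefect_single_apply_apply_sum hS, zero_mul, zero_smul, sub_zero, zero_sub, map_sum]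
    simp only [map_smul, hrow, smul_smul, smul_neg, neg_smul, ← Finset.sum_smul, Finset.mul_sum]
    congr! 3 with j
    ring
  rw [Module.End.mul_apply, Module.End.mul_apply, frameDefect_single_apply i v, map_sub, map_sub,
    map_smul, map_smul, map_smul, map_smul, hself, himage]
  module

theorem exists_eigenvalue_of_commute (ha : IsPolarFrame B e a) {i : ι} (hS : S i i = 0)
    (hS' : ∑ j, S i j * B (e (a j)) (a j) * S j i ≠ 0) {g : Module.End F V}
    (hg : Commute g (frameDefect B e a (Matrix.single i i 1)))
    (hgS : Commute g (frameDefect B e a S)) : ∃ s : F, g (a i) = s • a i := by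
  have hc := ha.anisotropic i
  set κ := B (e (a i)) (a i) ^ 2 * (∑ j, S i j * B (e (a j)) (a j) * S j i) with hκ
  have hκc : κ * B (e (a i)) (a i) ≠ 0 := mul_ne_zero (mul_ne_zero (pow_ne_zero 2 hc) hS') hc
  have hcomm := LinearMap.congr_fun ((hg.mul_right hgS).mul_right hg).eq (e (a i))
  rw [Module.End.mul_apply, Module.End.mul_apply _ g, ha.frameDefect_single_mul_mul_apply hS,
    ha.frameDefect_single_mul_mul_apply hS, map_smul, ← hκ] at hcomm
  refine ⟨(κ * B (e (a i)) (a i))⁻¹ * (κ * B (g (e (a i))) (a i)), ?_⟩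
  rw [mul_smul, ← hcomm, inv_smul_smul₀ hκc]

end IsPolarFrame

end FrameOperators

section PathGraph

variable {F V : Type*} [Field F] [AddCommGroup V] [Module F V]

theorem mem_of_pathGraph_adjMatrix {n : ℕ} [DecidableRel (SimpleGraph.pathGraph (n + 1)).Adj]
    {E : Submodule F V} {a : Fin (n + 1) → V} (h₀ : a 0 ∈ E)
    (hE : ∀ i, a i ∈ E → ∑ j, (SimpleGraph.pathGraph (n + 1)).adjMatrix F i j • a j ∈ E)
    (i : Fin (n + 1)) : a i ∈ E := by
  obtain ⟨i, hi⟩ := i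
  induction i using Nat.strong_induction_on with
  | _ i ih => ?_
  rcases i with - | i
  · exact h₀
  have hadj : (SimpleGraph.pathGraph (n + 1)).Adj ⟨i, by lia⟩ ⟨i + 1, hi⟩ :=
    SimpleGraph.pathGraph_adj.2 (Or.inl rfl)
  have hsum := hE _ (ih i (by lia) (by lia))
  rw [← Finset.add_sum_erase _ _ (Finset.mem_univ ⟨i + 1, hi⟩), SimpleGraph.adjMatrix_apply,
    if_pos hadj, one_smul] at hsum
  refine (E.add_mem_iff_left (E.sum_mem fun j hj => ?_)).1 hsum
  rw [SimpleGraph.adjMatrix_apply]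
  split_ifs with hij
  · have := Fin.val_ne_of_ne (Finset.ne_of_mem_erase hj)
    have := SimpleGraph.pathGraph_adj.1 hij
    exact E.smul_mem _ (ih j (by grind) j.2)
  · exact (zero_smul F (a j)).symm ▸ E.zero_mem

end PathGraph

section Rigidity

variable {F V : Type*} [Field F] [AddCommGroup V] [Module F V]
  {B : BilinForm F V} {e : Module.End F V}

namespace IsPolarFrame

theorem eq_smul_of_commute {n : ℕ} [DecidableRel (SimpleGraph.pathGraph (n + 2)).Adj]
    {a : Fin (n + 2) → V} (ha : IsPolarFrame B e a) {g : Module.End F V} (hge : Commute g e)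
    (hg₁ : Commute g (frameDefect B e a (Matrix.single 0 0 1)))
    (hg₂ : Commute g (frameDefect B e a ((SimpleGraph.pathGraph (n + 2)).adjMatrix F))) :
    ∃ s : F, ∀ v, g v = s • v := by
  set S := (SimpleGraph.pathGraph (n + 2)).adjMatrix F
  have hS₀ (j : Fin (n + 2)) : S 0 j = if j = 1 then 1 else 0 := by
    simp only [S, SimpleGraph.adjMatrix_apply, SimpleGraph.pathGraph_adj, Fin.ext_iff, Fin.val_zero,
      Fin.val_one]
    congr 1
    grind
  have hS : ∑ j, S 0 j * B (e (a j)) (a j) * S j 0 = B (e (a 1)) (a 1) := by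
    have hsymm (j : Fin (n + 2)) : S j 0 = S 0 j := (SimpleGraph.isSymm_adjMatrix _).apply 0 j
    simp [hsymm, hS₀]
  obtain ⟨s, hs⟩ := ha.exists_eigenvalue_of_commute (by simp [S]) (hS ▸ ha.anisotropic 1) hg₁ hg₂
  have hmaps {f : Module.End F V} (hf : Commute g f) {v : V}
      (hv : v ∈ Module.End.eigenspace g s) : f v ∈ Module.End.eigenspace g s := by
    rw [Module.End.mem_eigenspace_iff] at hv ⊢
    rw [← Module.End.mul_apply, hf.eq, Module.End.mul_apply, hv, map_smul]
  have hmem (i : Fin (n + 2)) : a i ∈ Module.End.eigenspace g s := by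
    refine mem_of_pathGraph_adjMatrix (Module.End.mem_eigenspace_iff.2 hs) (fun i hi => ?_) i
    have := hmaps hg₂ hi
    rwa [ha.frameDefect_apply_self, Submodule.smul_mem_iff _ (ha.anisotropic i)] at this
  have htop : Module.End.eigenspace g s = ⊤ := by
    rw [eq_top_iff, ← ha.span_eq_top, Submodule.span_le, Set.union_subset_iff]
    exact ⟨Set.range_subset_iff.2 hmem, Set.range_subset_iff.2 fun i => hmaps hge (hmem i)⟩
  exact ⟨s, fun v => Module.End.mem_eigenspace_iff.1 (htop ▸ Submodule.mem_top)⟩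

theorem finrank_le {ι : Type*} [Fintype ι] {a : ι → V} (ha : IsPolarFrame B e a) :
    finrank F V ≤ 2 * Fintype.card ι := by
  have h : Submodule.span F (Set.range (Sum.elim a (e ∘ a))) = ⊤ := by
    rw [Set.Sum.elim_range, ha.span_eq_top]
  rw [← finrank_top, ← h, two_mul, ← Fintype.card_sum]
  exact finrank_range_le_card _

theorem exists_isometries_forall_commute_eq_smul {n : ℕ} {a : Fin n → V} (ha : IsPolarFrame B e a)
    (hB : B.IsAlt) (hV : 2 < finrank F V) : ∃ x y : (Module.End F V)ˣ,
      (∀ u v, B (x.1 u) (x.1 v) = B u v) ∧ (∀ u v, B (y.1 u) (y.1 v) = B u v) ∧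
      ∀ g, Commute g e → Commute g (↑x * e * ↑x⁻¹) → Commute g (↑y * e * ↑y⁻¹) →
        ∃ s : F, ∀ v, g v = s • v := by
  have hn : 2 ≤ n := by
    have := ha.finrank_le
    rw [Fintype.card_fin] at this
    lia
  obtain ⟨n, rfl⟩ := Nat.exists_eq_add_of_le' hn
  classical
  obtain ⟨x, hx, hx', hxB⟩ := exists_isometry_of_skewAdjoint (B := B)
    (frameEnd_mul_self (S := Matrix.single 0 0 1) ha.isotropic)
    (apply_frameEnd_left hB (by simp [Matrix.IsSymm]))
  obtain ⟨y, hy, hy', hyB⟩ := exists_isometry_of_skewAdjoint (B := B)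
    (frameEnd_mul_self (S := (SimpleGraph.pathGraph (n + 2)).adjMatrix F) ha.isotropic)
    (apply_frameEnd_left hB (SimpleGraph.isSymm_adjMatrix _))
  refine ⟨x, y, hxB, hyB, fun g hg hgx hgy => ha.eq_smul_of_commute hg ?_ ?_⟩
  · rw [frameDefect, ← hx, ← hx']
    exact hgx.sub_right hg
  · rw [frameDefect, ← hy, ← hy']
    exact hgy.sub_right hg

end IsPolarFrame

end Rigidity

section Similitudes

variable {F V G : Type*} [Field F] [AddCommGroup V] [Module F V] [Group G]
  {φ : Representation F G V} {B : BilinForm F V}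

theorem exists_sq_eq_of_odd_card {M : Type*} [CommGroup M] (hG : Odd (Nat.card G)) (χ : G →* M) :
    ∃ ψ : G →* M, ∀ g, ψ g ^ 2 = χ g := by
  obtain ⟨k, hk⟩ := hG
  refine ⟨χ ^ (k + 1), fun g => ?_⟩
  calc (χ g ^ (k + 1)) ^ 2 = χ g ^ (2 * k + 1) * χ g := by
        rw [← pow_mul, ← pow_succ]
        congr 1
        ring
    _ = χ g := by rw [← map_pow, ← hk, pow_card_eq_one', map_one, one_mul]

theorem exists_multiplier (hB : B ≠ 0)
    (hφ : ∀ g, ∃ c : Fˣ, ∀ u v, B (φ g u) (φ g v) = c * B u v) :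
    ∃ χ : G →* Fˣ, ∀ g u v, B (φ g u) (φ g v) = χ g * B u v := by
  obtain ⟨u₀, v₀, h₀⟩ : ∃ u₀ v₀, B u₀ v₀ ≠ 0 := by
    contrapose! hB
    exact LinearMap.ext₂ hB
  choose χ hχ using hφ
  refine ⟨MonoidHom.mk' χ fun g h => Units.ext (mul_right_cancel₀ h₀ ?_), hχ⟩
  rw [← hχ, map_mul, Module.End.mul_apply, Module.End.mul_apply, hχ, hχ, Units.val_mul, mul_assoc]

theorem exists_isometric_twist (hB : B ≠ 0)
    (hφ : ∀ g, ∃ c : Fˣ, ∀ u v, B (φ g u) (φ g v) = c * B u v) (hG : Odd (Nat.card G)) :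
    ∃ ρ : Representation F G V, (∀ g u v, B (ρ g u) (ρ g v) = B u v) ∧
      commutant ρ = commutant φ := by
  obtain ⟨χ, hχ⟩ := exists_multiplier hB hφ
  obtain ⟨ψ, hψ⟩ := exists_sq_eq_of_odd_card hG χ
  let ρ : Representation F G V :=
    { toFun g := (ψ g)⁻¹ • φ g
      map_one' := by rw [map_one, map_one, inv_one, one_smul]
      map_mul' g h := by rw [map_mul, map_mul, mul_inv, smul_mul_smul_comm] }
  have hρ (g : G) (v : V) : ρ g v = (ψ g)⁻¹ • φ g v := rfl
  refine ⟨ρ, fun g u v => ?_, Subalgebra.ext fun f => ?_⟩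
  · simp only [hρ, Units.smul_def, map_smul, LinearMap.smul_apply, smul_eq_mul, hχ, ← hψ]
    simp [pow_two, mul_assoc]
  · simp only [mem_commutant_iff, hρ, LinearMap.map_smul_of_tower]
    exact forall₂_congr fun g v => (MulAction.injective (ψ g)⁻¹).eq_iff

theorem exists_mem_commutant_isometries_forall_commute_eq_smul [Finite F] [Finite G]
    [FiniteDimensional F V] (hG : Odd (Nat.card G)) (hG₀ : (Nat.card G : F) ≠ 0) (hB : B.IsAlt)
    (hnd : B.Nondegenerate) (hφ : ∀ g, ∃ c : Fˣ, ∀ u v, B (φ g u) (φ g v) = c * B u v)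
    (hV : 2 < finrank F V) :
    ∃ e ∈ commutant φ, ∃ x y : (Module.End F V)ˣ,
      (∀ u v, B (x.1 u) (x.1 v) = B u v) ∧ (∀ u v, B (y.1 u) (y.1 v) = B u v) ∧
      ∀ g, Commute g e → Commute g (↑x * e * ↑x⁻¹) → Commute g (↑y * e * ↑y⁻¹) →
        ∃ s : F, ∀ v, g v = s • v := by
  have : Nontrivial V := Module.nontrivial_of_finrank_pos (R := F) (by lia)
  obtain ⟨ρ, hρ, hφρ⟩ := exists_isometric_twist hnd.ne_zero hφ hG
  obtain ⟨e, he, n, a, ha⟩ := exists_isPolarFrame_commutant hG hG₀ hB hnd hρ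
  exact ⟨e, hφρ ▸ he, ha.exists_isometries_forall_commute_eq_smul hB hV⟩

end Similitudes

section RowVectors

variable {n : ℕ} {F : Type*} [Field F]

/-- The representation of `GL n F` on row vectors. The inverse turns the right action by
`Matrix.vecMul` into a left one. -/
def rowRepresentation (n : ℕ) (F : Type*) [Field F] :
    Representation F (GL (Fin n) F) (Fin n → F) where
  toFun g := (g⁻¹).1.toLinearMapRight'
  map_one' := by rw [inv_one, Units.val_one, Matrix.toLinearMapRight'_one]; rfl
  map_mul' g h := LinearMap.ext fun v => by
    rw [_root_.mul_inv_rev, Units.val_mul, Matrix.toLinearMapRight'_mul_apply, Module.End.mul_apply]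

theorem rowRepresentation_apply (g : GL (Fin n) F) (v : Fin n → F) :
    rowRepresentation n F g v = Matrix.vecMul v (g⁻¹).1 := rfl

theorem exists_rowRepresentation_inv_eq (x : (Module.End F (Fin n → F))ˣ) :
    ∃ X : GL (Fin n) F, rowRepresentation n F X⁻¹ = x := by
  refine ⟨⟨LinearMap.toMatrixRight' x.1, LinearMap.toMatrixRight' (↑x⁻¹ : Module.End F _), ?_, ?_⟩,
    ?_⟩
  · rw [← LinearMap.toMatrixRight'_comp, ← Module.End.mul_eq_comp, x.inv_mul]
    exact LinearMap.toMatrixRight'_id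
  · rw [← LinearMap.toMatrixRight'_comp, ← Module.End.mul_eq_comp, x.mul_inv]
    exact LinearMap.toMatrixRight'_id
  · exact LinearMap.toMatrixRight'.symm_apply_apply x.1

theorem eq_smul_one_of_rowRepresentation {g : GL (Fin n) F} {s : F}
    (h : ∀ v, rowRepresentation n F g⁻¹ v = s • v) : g.1 = s • 1 := by
  refine Matrix.ext_of_single_vecMul fun i => ?_
  rw [Matrix.vecMul_smul, Matrix.vecMul_one, ← h, rowRepresentation_apply, inv_inv]

theorem exists_mem_isometryGroup {B : BilinForm F (Fin n → F)} {x : (Module.End F (Fin n → F))ˣ}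
    (hx : ∀ u v, B (x.1 u) (x.1 v) = B u v) :
    ∃ X ∈ isometryGroup (fun u v => B u v), rowRepresentation n F X⁻¹ = x := by
  obtain ⟨X, hX⟩ := exists_rowRepresentation_inv_eq x
  have hXv (v : Fin n → F) : Matrix.vecMul v X.1 = x.1 v := by
    rw [← hX, rowRepresentation_apply, inv_inv]
  exact ⟨X, fun u v => by simp only [hXv, hx], hX⟩

theorem commute_rowRepresentation_of_mem_conjBy {H : Subgroup (GL (Fin n) F)}
    {e : Module.End F (Fin n → F)} (he : e ∈ commutant ((rowRepresentation n F).comp H.subtype))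
    {x : (Module.End F (Fin n → F))ˣ} {X : GL (Fin n) F} (hX : rowRepresentation n F X⁻¹ = x)
    {g : GL (Fin n) F} (hg : g ∈ conjBy H X) :
    Commute (rowRepresentation n F g) (↑x * e * ↑x⁻¹) := by
  obtain ⟨h, hh, rfl⟩ := hg
  have hX' : rowRepresentation n F X = (↑x⁻¹ : Module.End F _) :=
    (Units.inv_eq_of_mul_eq_one_right (by rw [← hX, ← map_mul, inv_mul_cancel, map_one])).symm
  have hcomm : Commute (rowRepresentation n F h) e :=
    LinearMap.ext fun v => (mem_commutant_iff.1 he ⟨h, hh⟩ v).symm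
  have hconj : rowRepresentation n F ((MulAut.conj X⁻¹).toMonoidHom h) =
      x * rowRepresentation n F h * ↑x⁻¹ := by
    rw [MulEquiv.toMonoidHom_eq_coe, MonoidHom.coe_coe, MulAut.conj_apply, map_mul, map_mul,
      inv_inv, hX, hX']
  rw [hconj]
  simpa [Commute, SemiconjBy, mul_assoc] using congrArg (· * (↑x⁻¹ : Module.End F _)) hcomm.eq

end RowVectors

theorem stmt3_general {n : ℕ} {F : Type*} [Field F] [Finite F] (hn : 2 < n)
    {B : BilinForm F (Fin n → F)} (hB : B.IsAlt) (hnd : B.Nondegenerate)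
    {H : Subgroup (GL (Fin n) F)} (hH : H ≤ similitudeGroup (fun u v => B u v))
    (hodd : Odd (Nat.card H)) (hcard : (Nat.card H : F) ≠ 0) :
    ∃ x ∈ isometryGroup (fun u v => B u v), ∃ y ∈ isometryGroup (fun u v => B u v),
      ∀ g ∈ H ⊓ conjBy H x ⊓ conjBy H y, ∃ c : F, (g : Matrix (Fin n) (Fin n) F) = c • 1 := by
  have hsim (h : H) : ∃ c : Fˣ, ∀ u v,
      B (rowRepresentation n F h u) (rowRepresentation n F h v) = c * B u v :=
    hH (H.inv_mem h.2)
  obtain ⟨e, he, x, y, hx, hy, hrigid⟩ := exists_mem_commutant_isometries_forall_commute_eq_smul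
    (φ := (rowRepresentation n F).comp H.subtype) hodd hcard hB hnd hsim (by simpa using hn)
  obtain ⟨X, hXB, hX⟩ := exists_mem_isometryGroup hx
  obtain ⟨Y, hYB, hY⟩ := exists_mem_isometryGroup hy
  refine ⟨X, hXB, Y, hYB, fun g hg => ?_⟩
  obtain ⟨⟨hgH, hgX⟩, hgY⟩ := Subgroup.inv_mem _ hg
  obtain ⟨s, hs⟩ := hrigid (rowRepresentation n F g⁻¹)
    (LinearMap.ext fun v => (mem_commutant_iff.1 he ⟨g⁻¹, hgH⟩ v).symm)
    (commute_rowRepresentation_of_mem_conjBy he hX hgX)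
    (commute_rowRepresentation_of_mem_conjBy he hY hgY)
  exact ⟨s, eq_smul_one_of_rowRepresentation hs⟩

theorem stmt3 (p f q m : ℕ) (hp : p.Prime) (hf : 1 ≤ f) (hq : q = p ^ f)
    (F : Type) [Field F] [Fintype F] (hcard : Fintype.card F = q)
    (hm : 4 ≤ 2 * m)
    (B : LinearMap.BilinForm F (Fin (2 * m) → F))
    (halt : ∀ v : Fin (2 * m) → F, B v v = 0) (hnd : ∀ v : Fin (2 * m) → F, (∀ w : Fin (2 * m) → F, B v w = 0) → v = 0)
    (hnonsolv : ¬ IsSolvable ↥(similitudeGroup (fun u v => B u v)))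
    (π : Set ℕ) (hπ : ∀ r ∈ π, r.Prime) (h2pi : 2 ∉ π) (hppi : p ∉ π)
    (htwo : 2 ≤ (π ∩ {r : ℕ | r.Prime ∧ r ∣ Nat.card (similitudeGroup (fun u v => B u v))}).ncard)
    (H : Subgroup (GL (Fin (2 * m)) F))
    (hH : IsHallSubgroupIn π (similitudeGroup (fun u v => B u v)) H)
    :
    ∃ x y z : GL (Fin (2 * m)) F,
      x ∈ (H : Set (GL (Fin (2 * m)) F)) * (isometryGroup (fun u v => B u v) : Set (GL (Fin (2 * m)) F)) ∧
      y ∈ (H : Set (GL (Fin (2 * m)) F)) * (isometryGroup (fun u v => B u v) : Set (GL (Fin (2 * m)) F)) ∧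
      z ∈ (H : Set (GL (Fin (2 * m)) F)) * (isometryGroup (fun u v => B u v) : Set (GL (Fin (2 * m)) F)) ∧
    ∀ g ∈ H ⊓ conjBy H x ⊓ conjBy H y ⊓ conjBy H z,
      ∃ c : F, (g : Matrix (Fin (2 * m)) (Fin (2 * m)) F) = c • (1 : Matrix (Fin (2 * m)) (Fin (2 * m)) F) := by
  have : Fact p.Prime := ⟨hp⟩
  have : CharP F p := charP_of_card_eq_prime_pow (hcard.trans hq)
  have hodd : Odd (Nat.card H) := Nat.not_even_iff_odd.1 fun h =>
    h2pi (hH.2.1 2 Nat.prime_two (even_iff_two_dvd.1 h))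
  have hcard₀ : (Nat.card H : F) ≠ 0 := fun h =>
    hppi (hH.2.1 p hp ((CharP.cast_eq_zero_iff F p _).1 h))
  have hB : B.Nondegenerate := (LinearMap.IsAlt.isRefl halt).nondegenerate_iff_separatingLeft.2 hnd
  obtain ⟨x, hx, y, hy, hxy⟩ := stmt3_general (by lia) halt hB hH.1 hodd hcard₀
  exact ⟨x, y, 1, ⟨1, H.one_mem, x, hx, one_mul x⟩, ⟨1, H.one_mem, y, hy, one_mul y⟩,
    ⟨1, H.one_mem, 1, Subgroup.one_mem _, one_mul 1⟩, fun g hg => hxy g hg.1⟩
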